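/- arXiv:2512.07106 — 5 statements merged into one kernel-verified Lean document; each statement's English description precedes it below -/
import Mathlib

section
/- Let K be a countably infinite field and let E ⊆ K be a set with positive upper Banach density (with respect to the additive group (K,+)). Then for every Laurent polynomial p(X) = Σ_{k=−N}^{N} p_k X^k with coefficients in K and constant term p₀ = 0, there exists a ∈ K* such that p(a) ∈ E − E. -/
open Filter Topology Pointwise
open scoped Classical

/-- A (additive) Følner sequence in a countable abelian group. -/
def IsAddFolner {A : Type*} [AddCommGroup A] (F : ℕ → Finset A) : Prop :=
  (∀ n, (F n).Nonempty) ∧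
    ∀ a : A, Tendsto
      (fun n => ((F n ∩ (F n).image (· + a)).card : ℝ) / ((F n).card : ℝ)) atTop (𝓝 1)

/-- `E` has positive upper Banach density. -/
def PosUpperBanachDensity {A : Type*} [AddCommGroup A] (E : Set A) : Prop :=
  ∃ F : ℕ → Finset A, IsAddFolner F ∧
    0 < limsup (fun n => (((F n).filter (· ∈ E)).card : ℝ) / ((F n).card : ℝ)) atTop

/-!
Averaging along a Følner sequence gives a translation invariant mean `M` with `M 1_E > 0`. With
`b = 1_E - M 1_E`, the function `y ↦ M (z ↦ b z * b (z + y))` is positive definite, and it takes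
the value `-(M 1_E) ^ 2 < 0` off `E - E`.

In characteristic `q` write each exponent as `k = m * q ^ j` with `q ∤ m`. As Frobenius is additive,
`p a = L (a ^ m)_m` for an additive map `L : K ^ T → K` and a set `T` of integers that are nonzero
in `K`. Pull back along `L` and average over the orbits `x ↦ (a ^ m * x m)_m`, using an affine
invariant mean of `K`. If `p a ∉ E - E` for all `a ≠ 0`, this gives a positive definite function on
`K ^ T`, invariant under that action, whose value at `(1, …, 1)` is negative.

No such function exists. Averaging along the coordinate axes splits an invariant positive definite
`φ` into invariant positive definite summands, and reduces the claim `0 ≤ φ x` to the case where `φ`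
has mean zero on the axes in the support of `x`. Then `φ x = 0` unless `x = 0`. When all exponents
in the support are positive, `φ` is constant on the polynomial curve `s ↦ ((1 + s) ^ m * x m)_m`
off `s = -1`; van der Corput differencing against rescaled curves removes its coefficients one at a
time until a line parallel to an axis remains. Negative exponents are symmetric. When both signs
occur, differencing `s ↦ (s ^ m * x m)_m` under translations kills the positive exponents, while
the pole at `0` keeps the curve nonconstant.
-/

section Means

variable {X Y ι : Type*}

/-- The algebra of bounded real functions on a set, on which means are evaluated. -/
def boundedFunctions (X : Type*) : Subalgebra ℝ (X → ℝ) where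
  carrier := {f | ∃ C, ∀ x, |f x| ≤ C}
  mul_mem' := by
    rintro f g ⟨C, hC⟩ ⟨D, hD⟩
    refine ⟨C * D, fun x => ?_⟩
    rw [Pi.mul_apply, abs_mul]
    exact mul_le_mul (hC x) (hD x) (abs_nonneg _) ((abs_nonneg _).trans (hC x))
  add_mem' := by
    rintro f g ⟨C, hC⟩ ⟨D, hD⟩
    exact ⟨C + D, fun x => (abs_add_le _ _).trans (add_le_add (hC x) (hD x))⟩
  algebraMap_mem' c := ⟨|c|, fun _ => le_rfl⟩

lemma comp_mem_boundedFunctions {f : X → ℝ} (hf : f ∈ boundedFunctions X) (u : Y → X) :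
    (fun y => f (u y)) ∈ boundedFunctions Y :=
  hf.imp fun _ hC y => hC (u y)

lemma indicator_one_mem_boundedFunctions (E : Set X) :
    E.indicator (1 : X → ℝ) ∈ boundedFunctions X :=
  ⟨1, fun x => by by_cases hx : x ∈ E <;> simp [hx]⟩

/-- A mean on `X`: a linear functional whose value at `f` lies between any bounds for `f`. It is
encoded as a functional on all real functions, which saves carrying boundedness proofs through
linear identities; its values at unbounded functions are meaningless. -/
structure IsMean (M : (X → ℝ) →ₗ[ℝ] ℝ) : Prop where
  map_mem_Icc : ∀ {f : X → ℝ} {a b : ℝ}, (∀ x, f x ∈ Set.Icc a b) → M f ∈ Set.Icc a b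

/-- Invariance of a mean under a self-map `σ` of `X`, required on bounded functions only. -/
def IsInvariantUnder (M : (X → ℝ) →ₗ[ℝ] ℝ) (σ : X → X) : Prop :=
  ∀ f ∈ boundedFunctions X, M (fun x => f (σ x)) = M f

namespace IsMean

variable {M : (X → ℝ) →ₗ[ℝ] ℝ}

lemma map_const (hM : IsMean M) (c : ℝ) : M (fun _ => c) = c := by
  simpa using hM.map_mem_Icc (f := fun _ => c) (a := c) (b := c) (by simp)

lemma abs_map_le (hM : IsMean M) {f : X → ℝ} {C : ℝ} (hf : ∀ x, |f x| ≤ C) : |M f| ≤ C :=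
  abs_le.2 (hM.map_mem_Icc fun x => abs_le.1 (hf x))

lemma le_map (hM : IsMean M) {f : X → ℝ} (hf : f ∈ boundedFunctions X) {a : ℝ}
    (ha : ∀ x, a ≤ f x) : a ≤ M f := by
  obtain ⟨C, hC⟩ := hf
  exact (hM.map_mem_Icc fun x => ⟨ha x, (abs_le.1 (hC x)).2⟩).1

lemma bind (hM : IsMean M) {A : X → (Y → ℝ) →ₗ[ℝ] ℝ} (hA : ∀ x, IsMean (A x)) :
    IsMean (M ∘ₗ LinearMap.pi A) :=
  ⟨fun hf => hM.map_mem_Icc fun x => (hA x).map_mem_Icc hf⟩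

lemma map (hM : IsMean M) (u : X → Y) : IsMean (M ∘ₗ LinearMap.funLeft ℝ ℝ u) :=
  ⟨fun hf => hM.map_mem_Icc fun x => hf (u x)⟩

end IsMean

/-- The uniform average over the finite family `u i`, `i ∈ s`. -/
noncomputable def averageOver (s : Finset ι) (u : ι → X) : (X → ℝ) →ₗ[ℝ] ℝ :=
  (s.card : ℝ)⁻¹ • ∑ i ∈ s, LinearMap.proj (u i)

lemma averageOver_apply (s : Finset ι) (u : ι → X) (f : X → ℝ) :
    averageOver s u f = (s.card : ℝ)⁻¹ * ∑ i ∈ s, f (u i) := by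
  simp [averageOver]

lemma isMean_averageOver {s : Finset ι} (hs : s.Nonempty) (u : ι → X) :
    IsMean (averageOver s u) where
  map_mem_Icc {f a b} hf := by
    have hcard : (0 : ℝ) < s.card := by exact_mod_cast hs.card_pos
    have hlower := s.card_nsmul_le_sum (fun i => f (u i)) a fun i _ => (hf (u i)).1
    have hupper := s.sum_le_card_nsmul (fun i => f (u i)) b fun i _ => (hf (u i)).2
    rw [nsmul_eq_mul] at hlower hupper
    rw [averageOver_apply, Set.mem_Icc, le_inv_mul_iff₀ hcard, inv_mul_le_iff₀ hcard]
    exact ⟨hlower, hupper⟩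

lemma exists_linearMap_tendsto_ultrafilter (U : Ultrafilter ι) :
    ∃ Λ : (ι → ℝ) →ₗ[ℝ] ℝ, ∀ f ∈ boundedFunctions ι, Tendsto f U (𝓝 (Λ f)) := by
  have hconv : ∀ f ∈ boundedFunctions ι, ∃ c, Tendsto f U (𝓝 c) := fun f ⟨C, hC⟩ => by
    obtain ⟨c, -, hc⟩ := (isCompact_Icc (a := -C) (b := C)).ultrafilter_le_nhds (U.map f)
      (le_principal_iff.2 (mem_map.2 (univ_mem' fun i => abs_le.1 (hC i))))
    exact ⟨c, hc⟩
  choose! L hL using hconv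
  let Λ₀ : Subalgebra.toSubmodule (boundedFunctions ι) →ₗ[ℝ] ℝ :=
    { toFun := fun f => L f
      map_add' := fun f g => tendsto_nhds_unique (hL _ (f + g).2) ((hL f f.2).add (hL g g.2))
      map_smul' := fun c f => tendsto_nhds_unique (hL _ (c • f).2) ((hL f f.2).const_smul c) }
  obtain ⟨Λ, hΛ⟩ := Λ₀.exists_extend
  refine ⟨Λ, fun f hf => ?_⟩
  have : Λ f = L f := LinearMap.congr_fun hΛ ⟨f, hf⟩
  exact this ▸ hL f hf

lemma exists_isMean_mapClusterPt (l : Filter ι) [NeBot l] {m : ι → (X → ℝ) →ₗ[ℝ] ℝ}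
    (hm : ∀ i, IsMean (m i)) :
    ∃ M : (X → ℝ) →ₗ[ℝ] ℝ, IsMean M ∧
      ∀ f ∈ boundedFunctions X, MapClusterPt (M f) l (fun i => m i f) := by
  obtain ⟨Λ, hΛ⟩ := exists_linearMap_tendsto_ultrafilter (Ultrafilter.of l)
  have htendsto : ∀ f ∈ boundedFunctions X,
      Tendsto (fun i => m i f) (Ultrafilter.of l) (𝓝 (Λ fun i => m i f)) := fun f ⟨C, hC⟩ =>
    hΛ _ ⟨C, fun i => (hm i).abs_map_le hC⟩
  refine ⟨Λ ∘ₗ LinearMap.pi m, ⟨fun {f a b} hf => ?_⟩, fun f hf => ?_⟩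
  · have hfb : f ∈ boundedFunctions X :=
      ⟨max |a| |b|, fun x => abs_le_max_abs_abs (hf x).1 (hf x).2⟩
    exact isClosed_Icc.mem_of_tendsto (htendsto f hfb)
      (Eventually.of_forall fun i => (hm i).map_mem_Icc hf)
  · exact (htendsto f hf).mapClusterPt.mono (Ultrafilter.of_le l)

end Means

section InvariantMeans

variable {X ι : Type*} {M : (X → ℝ) →ₗ[ℝ] ℝ}

lemma eq_of_mapClusterPt_of_tendsto {Z : Type*} [TopologicalSpace Z] [T2Space Z] {l : Filter ι}
    {u : ι → Z} {a b : Z} (ha : MapClusterPt a l u) (hb : Tendsto u l (𝓝 b)) : a = b :=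
  eq_of_nhds_neBot (NeBot.mono ha (inf_le_inf_left _ hb))

lemma averageOver_range_iterate (σ : X → X) (n : ℕ) (x : X) (f : X → ℝ) :
    averageOver (Finset.range n) (fun k => σ^[k] x) f = birkhoffAverage ℝ σ f n x := by
  simp [averageOver_apply, birkhoffAverage, birkhoffSum]

lemma birkhoffAverage_comp_of_commute {ρ σ : X → X} (h : Function.Commute ρ σ) (f : X → ℝ)
    (n : ℕ) (x : X) :
    birkhoffAverage ℝ σ (fun x => f (ρ x)) n x = birkhoffAverage ℝ σ f n (ρ x) := by
  simp only [birkhoffAverage, birkhoffSum, (h.iterate_right _).eq x]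

lemma abs_birkhoffAverage_apply_sub_le {f : X → ℝ} {C : ℝ} (hC : ∀ x, |f x| ≤ C) (σ : X → X)
    (n : ℕ) (x : X) :
    |birkhoffAverage ℝ σ f n (σ x) - birkhoffAverage ℝ σ f n x| ≤ (n : ℝ)⁻¹ * (2 * C) := by
  rw [birkhoffAverage_apply_sub_birkhoffAverage, smul_eq_mul, abs_mul, abs_inv, Nat.abs_cast]
  have := (abs_sub (f (σ^[n] x)) (f x)).trans (add_le_add (hC _) (hC _))
  gcongr
  linarith

/-- As in the Markov–Kakutani theorem, averaging over orbits of `σ` creates invariance under `σ`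
without destroying invariance under maps that commute with `σ`. -/
lemma IsMean.exists_isInvariantUnder (hM : IsMean M) (σ : X → X) :
    ∃ M' : (X → ℝ) →ₗ[ℝ] ℝ, IsMean M' ∧ IsInvariantUnder M' σ ∧
      ∀ ρ, Function.Commute ρ σ → IsInvariantUnder M ρ → IsInvariantUnder M' ρ := by
  let m (n : ℕ) : (X → ℝ) →ₗ[ℝ] ℝ := M ∘ₗ LinearMap.pi fun x =>
    averageOver (Finset.range (n + 1)) fun k => σ^[k] x
  have hm (n : ℕ) (f : X → ℝ) : m n f = M (birkhoffAverage ℝ σ f (n + 1)) :=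
    congrArg M (funext fun x => averageOver_range_iterate σ (n + 1) x f)
  obtain ⟨M', hM', hcluster⟩ := exists_isMean_mapClusterPt atTop (m := m)
    fun n => hM.bind fun x => isMean_averageOver Finset.nonempty_range_add_one _
  refine ⟨M', hM', fun f hf => ?_, fun ρ hρ hMρ f hf => ?_⟩
  · obtain ⟨C, hC⟩ := hf
    have hlim : Tendsto (fun n : ℕ => ((n + 1 : ℕ) : ℝ)⁻¹ * (2 * C)) atTop (𝓝 0) := by
      simpa using ((tendsto_inv_atTop_nhds_zero_nat (𝕜 := ℝ)).comp
        (tendsto_add_atTop_nat 1)).mul_const (2 * C)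
    rw [← sub_eq_zero, ← map_sub]
    refine eq_of_mapClusterPt_of_tendsto
      (hcluster _ (sub_mem (comp_mem_boundedFunctions ⟨C, hC⟩ σ) ⟨C, hC⟩))
      (squeeze_zero_norm (fun n => ?_) hlim)
    rw [map_sub, hm, hm, ← map_sub]
    refine hM.abs_map_le fun x => ?_
    rw [Pi.sub_apply, birkhoffAverage_comp_of_commute (Function.Commute.refl σ)]
    exact abs_birkhoffAverage_apply_sub_le hC σ (n + 1) x
  · have hbounded (n : ℕ) : birkhoffAverage ℝ σ f (n + 1) ∈ boundedFunctions X :=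
      hf.imp fun C hC x => by
        rw [← averageOver_range_iterate]
        exact (isMean_averageOver Finset.nonempty_range_add_one _).abs_map_le hC
    have hzero (n : ℕ) : m n ((fun x => f (ρ x)) - f) = 0 := by
      rw [map_sub, hm, hm, sub_eq_zero,
        funext (birkhoffAverage_comp_of_commute hρ f (n + 1)), hMρ _ (hbounded _)]
    rw [← sub_eq_zero, ← map_sub]
    refine eq_of_mapClusterPt_of_tendsto
      (hcluster _ (sub_mem (comp_mem_boundedFunctions hf ρ) hf)) ?_
    simpa only [hzero] using tendsto_const_nhds

variable [Nonempty X]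

lemma exists_isMean_forall_mem_isInvariantUnder {σ : ι → X → X}
    (hσ : ∀ i j, Function.Commute (σ i) (σ j)) (s : Finset ι) :
    ∃ M : (X → ℝ) →ₗ[ℝ] ℝ, IsMean M ∧ ∀ i ∈ s, IsInvariantUnder M (σ i) := by
  induction s using Finset.induction_on with
  | empty =>
    exact ⟨LinearMap.proj (Classical.arbitrary X), ⟨fun hf => hf _⟩, by simp⟩
  | insert i s _ ih =>
    obtain ⟨M, hM, hinv⟩ := ih
    obtain ⟨M', hM', hinv', hcomm⟩ := hM.exists_isInvariantUnder (σ i)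
    exact ⟨M', hM', Finset.forall_mem_insert _ _ _ |>.2
      ⟨hinv', fun j hj => hcomm _ (hσ j i) (hinv j hj)⟩⟩

theorem exists_isMean_forall_isInvariantUnder {σ : ι → X → X}
    (hσ : ∀ i j, Function.Commute (σ i) (σ j)) :
    ∃ M : (X → ℝ) →ₗ[ℝ] ℝ, IsMean M ∧ ∀ i, IsInvariantUnder M (σ i) := by
  choose m hm hinv using exists_isMean_forall_mem_isInvariantUnder hσ
  obtain ⟨M, hM, hcluster⟩ := exists_isMean_mapClusterPt atTop hm
  refine ⟨M, hM, fun i f hf => ?_⟩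
  rw [← sub_eq_zero, ← map_sub]
  refine eq_of_mapClusterPt_of_tendsto
    (hcluster _ (sub_mem (comp_mem_boundedFunctions hf (σ i)) hf)) (tendsto_const_nhds.congr' ?_)
  filter_upwards [eventually_ge_atTop {i}] with s hs
  rw [map_sub, hinv s i (Finset.singleton_subset_iff.1 hs) f hf, sub_self]

end InvariantMeans

section TranslationInvariantMeans

variable {A : Type*} [AddCommGroup A] {M : (A → ℝ) →ₗ[ℝ] ℝ}

/-- A mean on an abelian group that is invariant under translations. -/
structure IsTranslationInvariantMean (M : (A → ℝ) →ₗ[ℝ] ℝ) : Prop extends IsMean M where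
  translate : ∀ g, IsInvariantUnder M (· + g)

lemma exists_isTranslationInvariantMean (A : Type*) [AddCommGroup A] :
    ∃ M : (A → ℝ) →ₗ[ℝ] ℝ, IsTranslationInvariantMean M := by
  obtain ⟨M, hM, hinv⟩ := exists_isMean_forall_isInvariantUnder (σ := fun g x : A => x + g)
    fun g h x => add_right_comm x h g
  exact ⟨M, hM, hinv⟩

namespace IsTranslationInvariantMean

variable [Infinite A]

lemma map_single (hM : IsTranslationInvariantMean M) (x : A) (c : ℝ) :
    M (Pi.single x c) = 0 := by
  have hbounded (y : A) : (Pi.single y c : A → ℝ) ∈ boundedFunctions A :=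
    ⟨|c|, fun z => by by_cases h : z = y <;> simp [h]⟩
  have hshift (y : A) : M (Pi.single y c) = M (Pi.single x c) := by
    rw [← hM.translate (y - x) _ (hbounded y)]
    congr 1 with z
    simp only [Pi.single_apply, ← eq_sub_iff_add_eq, sub_sub_cancel]
  have hcard (n : ℕ) : n • |M (Pi.single x c)| ≤ |c| := by
    obtain ⟨s, -, hs⟩ := (Set.infinite_univ (α := A)).exists_subset_card_eq n
    have : |M (∑ y ∈ s, Pi.single y c)| ≤ |c| := hM.abs_map_le fun z => by
      rw [Finset.sum_apply]
      by_cases hz : z ∈ s <;> simp [Pi.single_apply, hz]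
    rwa [map_sum, Finset.sum_congr rfl fun y _ => hshift y, Finset.sum_const, abs_nsmul, hs] at this
  by_contra hne
  obtain ⟨n, hn⟩ := exists_lt_nsmul (abs_pos.2 hne) |c|
  exact hn.not_ge (hcard n)

lemma map_congr_off_finset (hM : IsTranslationInvariantMean M) (s : Finset A) {f g : A → ℝ}
    (h : ∀ x ∉ s, f x = g x) : M f = M g := by
  have hsum : f - g = ∑ x ∈ s, Pi.single x (f x - g x) := by
    ext y
    rw [Finset.sum_apply]
    by_cases hy : y ∈ s <;> simp [hy, h]
  rw [← sub_eq_zero, ← map_sub, hsum, map_sum]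
  exact Finset.sum_eq_zero fun x _ => hM.map_single x _

end IsTranslationInvariantMean

end TranslationInvariantMeans

section FolnerMeans

lemma averageOver_id_indicator_one {X : Type*} (s : Finset X) (E : Set X) :
    averageOver s id (E.indicator 1) = ((s.filter (· ∈ E)).card : ℝ) / s.card := by
  simp [averageOver_apply, Set.indicator_apply, Finset.sum_boole, div_eq_inv_mul]

variable {A : Type*} [AddCommGroup A]

lemma abs_averageOver_translate_sub_le (s : Finset A) (hs : s.Nonempty) {f : A → ℝ} {C : ℝ}
    (hC : ∀ x, |f x| ≤ C) (a : A) :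
    |averageOver s id ((fun x => f (x + a)) - f)| ≤
      2 * C * (1 - ((s ∩ s.image (· + a)).card : ℝ) / s.card) := by
  set t := s.image (· + a)
  have hcard : (0 : ℝ) < s.card := by exact_mod_cast hs.card_pos
  have hcard_t : t.card = s.card := Finset.card_image_of_injective _ (add_left_injective a)
  have hsum_t : ∑ x ∈ s, f (x + a) = ∑ x ∈ t, f x :=
    (Finset.sum_image (add_left_injective a).injOn).symm
  have hbound (r : Finset A) : |∑ x ∈ r, f x| ≤ r.card * C := by
    rw [← nsmul_eq_mul]
    exact (Finset.abs_sum_le_sum_abs _ _).trans (Finset.sum_le_card_nsmul _ _ C fun x _ => hC x)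
  have hts : ((t \ s).card : ℝ) = s.card - (s ∩ t).card := by
    rw [eq_sub_iff_add_eq, ← hcard_t, Finset.inter_comm]
    exact_mod_cast Finset.card_sdiff_add_card_inter t s
  have hst : ((s \ t).card : ℝ) = s.card - (s ∩ t).card := by
    rw [eq_sub_iff_add_eq]
    exact_mod_cast Finset.card_sdiff_add_card_inter s t
  rw [averageOver_apply]
  simp only [id, Pi.sub_apply, Finset.sum_sub_distrib]
  rw [hsum_t, ← Finset.sum_sdiff_sub_sum_sdiff, abs_mul, abs_inv, Nat.abs_cast,
    inv_mul_le_iff₀ hcard]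
  calc |∑ x ∈ t \ s, f x - ∑ x ∈ s \ t, f x|
      ≤ (t \ s).card * C + (s \ t).card * C :=
        (abs_sub _ _).trans (add_le_add (hbound _) (hbound _))
    _ = s.card * (2 * C * (1 - (s ∩ t).card / s.card)) := by
        rw [hts, hst]
        field_simp
        ring

lemma PosUpperBanachDensity.exists_isTranslationInvariantMean {E : Set A}
    (hE : PosUpperBanachDensity E) :
    ∃ M : (A → ℝ) →ₗ[ℝ] ℝ, IsTranslationInvariantMean M ∧ 0 < M (E.indicator 1) := by
  obtain ⟨F, ⟨hne, hF⟩, hlim⟩ := hE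
  simp only [← averageOver_id_indicator_one] at hlim
  obtain ⟨δ, hδ, hδ_lt⟩ := exists_between hlim
  have hmean (n : ℕ) : IsMean (averageOver (F n) id) := isMean_averageOver (hne n) id
  have hfreq : ∃ᶠ n in atTop, δ < averageOver (F n) id (E.indicator 1) := by
    refine frequently_lt_of_lt_limsup (IsBoundedUnder.isCoboundedUnder_le ?_) hδ_lt
    exact isBoundedUnder_of ⟨0, fun n => (hmean n).le_map
      (indicator_one_mem_boundedFunctions E) (Set.indicator_nonneg fun _ _ => zero_le_one)⟩
  let S : Set ℕ := {n | δ < averageOver (F n) id (E.indicator 1)}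
  have : NeBot (atTop ⊓ 𝓟 S) := frequently_mem_iff_neBot.1 hfreq
  obtain ⟨M, hM, hcluster⟩ := exists_isMean_mapClusterPt (atTop ⊓ 𝓟 S) hmean
  refine ⟨M, ⟨hM, fun a f hf => ?_⟩, hδ.trans_le ?_⟩
  · obtain ⟨C, hC⟩ := hf
    have hlim : Tendsto (fun n => 2 * C * (1 - ((F n ∩ (F n).image (· + a)).card : ℝ) /
        (F n).card)) atTop (𝓝 0) := by
      simpa using ((hF a).const_sub 1).const_mul (2 * C)
    rw [← sub_eq_zero, ← map_sub]
    exact eq_of_mapClusterPt_of_tendsto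
      (hcluster _ (sub_mem (comp_mem_boundedFunctions ⟨C, hC⟩ _) ⟨C, hC⟩))
      ((squeeze_zero_norm (fun n => abs_averageOver_translate_sub_le _ (hne n) hC a) hlim).mono_left
        inf_le_left)
  · by_contra! hlt
    obtain ⟨n, hn_lt, hn⟩ := ((hcluster _ (indicator_one_mem_boundedFunctions E)).frequently
      (Iio_mem_nhds hlt)).and_eventually (mem_inf_of_right (mem_principal_self S)) |>.exists
    exact lt_asymm hn_lt hn

end FolnerMeans

section AffineMeans

variable {K : Type*} [Field K]

/-- A mean on a field that is invariant under the affine group. -/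
structure IsAffineMean (M : (K → ℝ) →ₗ[ℝ] ℝ) : Prop extends IsTranslationInvariantMean M where
  dilate : ∀ a ≠ 0, IsInvariantUnder M (a * ·)

lemma exists_isAffineMean (K : Type*) [Field K] :
    ∃ M : (K → ℝ) →ₗ[ℝ] ℝ, IsAffineMean M := by
  obtain ⟨T, hT⟩ := exists_isTranslationInvariantMean K
  obtain ⟨D, hD, hDinv⟩ := exists_isMean_forall_isInvariantUnder (σ := fun a t : Kˣ => a * t)
    fun a b t => mul_left_comm a b t
  let dilated (t : Kˣ) : (K → ℝ) →ₗ[ℝ] ℝ := T ∘ₗ LinearMap.funLeft ℝ ℝ ((t : K) * ·)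
  have hdilated (t : Kˣ) : IsMean (dilated t) := hT.map _
  refine ⟨D ∘ₗ LinearMap.pi dilated, ⟨hD.bind hdilated, fun h f hf => ?_⟩, fun a ha f hf => ?_⟩
  · refine congrArg D (funext fun t => ?_)
    have := hT.translate ((t : K)⁻¹ * h) _ (comp_mem_boundedFunctions hf ((t : K) * ·))
    simp only [mul_add, mul_inv_cancel_left₀ t.ne_zero] at this
    exact this
  · obtain ⟨C, hC⟩ := hf
    have := hDinv (Units.mk0 a ha) (fun t => dilated t f) ⟨C, fun t => (hdilated t).abs_map_le hC⟩
    refine Eq.trans (congrArg D (funext fun t => congrArg T (funext fun s => ?_))) this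
    change f (a * (t * s)) = f (a * t * s)
    rw [mul_assoc]

end AffineMeans

section PositiveDefinite

variable {V κ : Type*} [AddCommGroup V] [Fintype κ]

/-- The quadratic form with weights `c` and nodes `x` attached to a function on an abelian group,
as a linear functional of the function. -/
noncomputable def gramForm (c : κ → ℝ) (x : κ → V) : (V → ℝ) →ₗ[ℝ] ℝ :=
  ∑ i, ∑ j, (c i * c j) • LinearMap.proj (x i - x j)

lemma gramForm_apply (c : κ → ℝ) (x : κ → V) (φ : V → ℝ) :
    gramForm c x φ = ∑ i, ∑ j, c i * c j * φ (x i - x j) := by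
  simp [gramForm]

lemma gramForm_comp_equiv {κ' : Type*} [Fintype κ'] (σ : κ' ≃ κ) (c : κ → ℝ) (x : κ → V)
    (φ : V → ℝ) : gramForm (c ∘ σ) (x ∘ σ) φ = gramForm c x φ := by
  simp only [gramForm_apply, Function.comp_apply]
  rw [← σ.sum_comp]
  exact Finset.sum_congr rfl fun i _ => σ.sum_comp fun j => c (σ i) * c j * φ (x (σ i) - x j)

lemma gramForm_family_eq_sum {T : Type*} (c : κ → ℝ) (x : κ → V) (Φ : T → V → ℝ) :
    (fun t => gramForm c x (Φ t)) = ∑ i, ∑ j, (c i * c j) • fun t => Φ t (x i - x j) := by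
  ext t
  simp [gramForm_apply]

lemma gramForm_map_mean {T : Type*} (M : (T → ℝ) →ₗ[ℝ] ℝ) (c : κ → ℝ) (x : κ → V)
    (Φ : T → V → ℝ) :
    gramForm c x (fun y => M fun t => Φ t y) = M fun t => gramForm c x (Φ t) := by
  rw [gramForm_family_eq_sum, gramForm_apply]
  simp only [map_sum, map_smul, smul_eq_mul]

lemma gramForm_mem_boundedFunctions {T : Type*} (c : κ → ℝ) (x : κ → V) {Φ : T → V → ℝ}
    (hΦ : ∀ y, (fun t => Φ t y) ∈ boundedFunctions T) :
    (fun t => gramForm c x (Φ t)) ∈ boundedFunctions T := by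
  rw [gramForm_family_eq_sum]
  exact sum_mem fun i _ => sum_mem fun j _ => Subalgebra.smul_mem _ (hΦ _) _

/-- A positive definite function on an abelian group, real valued and hence even. -/
structure IsPositiveDefinite (φ : V → ℝ) : Prop where
  even : ∀ x, φ (-x) = φ x
  gramForm_fin_nonneg : ∀ {n : ℕ} (c : Fin n → ℝ) (x : Fin n → V), 0 ≤ gramForm c x φ

lemma gramForm_vecCons {n : ℕ} {φ : V → ℝ} (heven : ∀ x, φ (-x) = φ x) (a : ℝ) (c : Fin n → ℝ)
    (z : V) (x : Fin n → V) :
    gramForm (Matrix.vecCons a c) (Matrix.vecCons z x) φ =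
      a ^ 2 * φ 0 + 2 * a * ∑ i, c i * φ (z - x i) + gramForm c x φ := by
  have hflip (i : Fin n) : c i * a * φ (x i - z) = a * (c i * φ (z - x i)) := by
    rw [← heven, neg_sub]
    ring
  simp only [gramForm_apply, Fin.sum_univ_succ, Matrix.cons_val_zero, Matrix.cons_val_succ,
    sub_self, Finset.sum_add_distrib, hflip, mul_assoc a, ← Finset.mul_sum]
  ring

namespace IsPositiveDefinite

variable {φ : V → ℝ}

lemma gramForm_nonneg (hφ : IsPositiveDefinite φ) (c : κ → ℝ) (x : κ → V) :
    0 ≤ gramForm c x φ := by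
  rw [← gramForm_comp_equiv (Fintype.equivFin κ).symm]
  exact hφ.gramForm_fin_nonneg _ _

lemma abs_le (hφ : IsPositiveDefinite φ) (x : V) : |φ x| ≤ φ 0 := by
  have hadd := hφ.gramForm_nonneg ![1, 1] ![x, 0]
  have hsub := hφ.gramForm_nonneg ![1, -1] ![x, 0]
  simp only [gramForm_apply, Fin.sum_univ_two, Matrix.cons_val_zero, Matrix.cons_val_one, sub_self,
    sub_zero, zero_sub, hφ.even] at hadd hsub
  exact _root_.abs_le.2 ⟨by linarith, by linarith⟩

lemma map_zero_nonneg (hφ : IsPositiveDefinite φ) : 0 ≤ φ 0 :=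
  (abs_nonneg _).trans (hφ.abs_le 0)

lemma mem_boundedFunctions (hφ : IsPositiveDefinite φ) : φ ∈ boundedFunctions V :=
  ⟨φ 0, hφ.abs_le⟩

lemma eq_zero_of_map_zero (hφ : IsPositiveDefinite φ) (h : φ 0 = 0) (x : V) : φ x = 0 :=
  abs_nonpos_iff.1 ((hφ.abs_le x).trans h.le)

lemma comp_addMonoidHom {W : Type*} [AddCommGroup W] (hφ : IsPositiveDefinite φ) (L : W →+ V) :
    IsPositiveDefinite fun w => φ (L w) where
  even w := by rw [map_neg, hφ.even]
  gramForm_fin_nonneg c x := by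
    simpa only [gramForm_apply, map_sub] using hφ.gramForm_nonneg c fun i => L (x i)

section Mean

variable {T : Type*} {M : (T → ℝ) →ₗ[ℝ] ℝ}

lemma mean (hM : IsMean M) {Φ : T → V → ℝ} (hΦ : ∀ t, IsPositiveDefinite (Φ t)) {C : ℝ}
    (hC : ∀ t, Φ t 0 ≤ C) : IsPositiveDefinite fun y => M fun t => Φ t y where
  even y := by simp only [(hΦ _).even]
  gramForm_fin_nonneg c x := by
    rw [gramForm_map_mean]
    exact hM.le_map
      (gramForm_mem_boundedFunctions c x fun y => ⟨C, fun t => ((hΦ t).abs_le y).trans (hC t)⟩)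
      fun t => (hΦ t).gramForm_nonneg c x

lemma mean_eval (hφ : IsPositiveDefinite φ) (hM : IsMean M) :
    IsPositiveDefinite fun F : T → V => M fun t => φ (F t) :=
  mean hM (fun t => hφ.comp_addMonoidHom (Pi.evalAddMonoidHom (fun _ => V) t))
    (C := φ 0) fun _ => le_rfl

lemma autocorrelation {A : Type*} [AddCommGroup A] {M : (A → ℝ) →ₗ[ℝ] ℝ}
    (hM : IsTranslationInvariantMean M) {b : A → ℝ} (hb : b ∈ boundedFunctions A) :
    IsPositiveDefinite fun y => M fun z => b z * b (z + y) := by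
  have hprod (y : A) : (fun z => b z * b (z + y)) ∈ boundedFunctions A :=
    mul_mem hb (comp_mem_boundedFunctions hb (· + y))
  refine ⟨fun y => ?_, fun c x => ?_⟩
  · have := hM.translate y _ (hprod (-y))
    simpa only [add_neg_cancel_right, mul_comm] using this.symm
  · have hshift (i j) : (M fun z => b z * b (z + (x i - x j))) =
        M fun z => b (z + x i) * b (z + x j) := by
      rw [← hM.translate (x j) _ (hprod (x i - x j))]
      simp only [add_assoc, add_sub_cancel, mul_comm]
    have hsq : (fun z => (∑ i, c i * b (z + x i)) ^ 2) =
        ∑ i, ∑ j, (c i * c j) • fun z => b (z + x i) * b (z + x j) := by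
      ext z
      simp only [sq, Finset.sum_mul_sum, Finset.sum_apply, Pi.smul_apply, smul_eq_mul]
      exact Finset.sum_congr rfl fun i _ => Finset.sum_congr rfl fun j _ => by ring
    have hval : gramForm c x (fun y => M fun z => b z * b (z + y)) =
        M fun z => (∑ i, c i * b (z + x i)) ^ 2 := by
      rw [hsq, gramForm_apply]
      simp only [map_sum, map_smul, smul_eq_mul, hshift]
    rw [hval]
    refine hM.le_map (hsq ▸ sum_mem fun i _ => sum_mem fun j _ => Subalgebra.smul_mem _
      (mul_mem (comp_mem_boundedFunctions hb _) (comp_mem_boundedFunctions hb _)) _)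
      fun z => sq_nonneg _

end Mean

/-- Averaging `0 ≤ gramForm 1 y φ` over `N` of the nodes `y`, one after the other. -/
lemma gramForm_one_add_nonneg {M : (V → ℝ) →ₗ[ℝ] ℝ} (hM : IsTranslationInvariantMean M)
    (hφ : IsPositiveDefinite φ) (N : ℕ) {n : ℕ} (x : Fin n → V) :
    0 ≤ gramForm 1 x φ + 2 * N * n * M φ + N * φ 0 + N * (N - 1) * M φ := by
  induction N generalizing n with
  | zero => simpa using hφ.gramForm_nonneg 1 x
  | succ N ih =>
    have hmem (i : Fin n) : (fun z => φ (z - x i)) ∈ boundedFunctions V :=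
      comp_mem_boundedFunctions hφ.mem_boundedFunctions (· - x i)
    have hmean : M (∑ i, fun z => φ (z - x i)) = n * M φ := by
      have hshift (i : Fin n) : (M fun z => φ (z - x i)) = M φ := by
        simpa only [sub_eq_add_neg] using hM.translate (-x i) φ hφ.mem_boundedFunctions
      simp [hshift]
    have hone : (1 : Fin (n + 1) → ℝ) = Matrix.vecCons 1 1 := by
      ext i
      cases i using Fin.cases <;> rfl
    have hlower (z : V) : -(gramForm 1 x φ + 2 * N * (n + 1) * M φ + (N + 1) * φ 0 +
        N * (N - 1) * M φ) / 2 ≤ (∑ i, fun z => φ (z - x i)) z := by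
      have := ih (Matrix.vecCons z x)
      rw [hone, gramForm_vecCons hφ.even] at this
      push_cast at this
      simp only [Pi.one_apply, one_mul] at this
      rw [Finset.sum_apply]
      linarith
    have := hM.le_map (sum_mem fun i _ => hmem i) hlower
    rw [hmean] at this
    push_cast
    linarith

theorem map_mean_nonneg {M : (V → ℝ) →ₗ[ℝ] ℝ} (hM : IsTranslationInvariantMean M)
    (hφ : IsPositiveDefinite φ) : 0 ≤ M φ := by
  by_contra! hneg
  obtain ⟨N, hN⟩ := exists_nat_gt (φ 0 / -M φ)
  have := gramForm_one_add_nonneg hM hφ (N + 1) (n := 0) Fin.elim0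
  simp only [gramForm_apply, Finset.univ_eq_empty, Finset.sum_empty] at this
  rw [div_lt_iff₀ (by linarith)] at hN
  push_cast at this
  nlinarith

lemma natCast_mul_sq_le (hφ : IsPositiveDefinite φ) {N : ℕ} {v : Fin N → V} {m : ℝ}
    (hm : ∀ i, φ (v i) = m) (horth : Pairwise fun i j => φ (v i - v j) = 0) :
    N * m ^ 2 ≤ φ 0 ^ 2 := by
  have hgram : gramForm 1 v φ = N * φ 0 := by
    have hrow (i : Fin N) : ∑ j, φ (v i - v j) = φ 0 := by
      rw [Fintype.sum_eq_single i fun j hj => horth hj.symm, sub_self]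
    simp [gramForm_apply, hrow]
  have hquad (l : ℝ) : 0 ≤ φ 0 * (l * l) + 2 * N * m * l + N * φ 0 := by
    have := hφ.gramForm_nonneg (Matrix.vecCons l 1) (Matrix.vecCons 0 v)
    rw [gramForm_vecCons hφ.even, hgram] at this
    simp only [Pi.one_apply, one_mul, zero_sub, hφ.even, hm, Finset.sum_const, Finset.card_univ,
      Fintype.card_fin, nsmul_eq_mul] at this
    linarith
  have hdiscrim := discrim_le_zero hquad
  rcases N.eq_zero_or_pos with rfl | hN
  · simpa using sq_nonneg (φ 0)
  · have hN : (0 : ℝ) < N := by exact_mod_cast hN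
    refine le_of_mul_le_mul_left ?_ hN
    rw [discrim] at hdiscrim
    linarith

/-- An abstract van der Corput lemma: for `mean_eval`, it makes the average of a function along a
curve vanish as soon as the averages along differences of suitable modifications of the curve do. -/
theorem eq_zero_of_forall_finite_map_sub_ne_zero {J : Type*} [Infinite J]
    (hφ : IsPositiveDefinite φ) {v : J → V} {m : ℝ} (hm : ∀ j, φ (v j) = m)
    (horth : ∀ j, {j' | φ (v j' - v j) ≠ 0}.Finite) : m = 0 := by
  have hsymm : Std.Symm fun i j => φ (v i - v j) = 0 :=
    ⟨fun i j h => by rw [← hφ.even, neg_sub, h]⟩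
  obtain ⟨s, -, hs⟩ := exists_seq_of_forall_finset_exists' (fun _ => True)
    (fun i j : J => φ (v i - v j) = 0) fun S _ => by
      obtain ⟨j, hj⟩ := (S.finite_toSet.biUnion fun i _ => horth i).infinite_compl.nonempty
      refine ⟨j, trivial, fun i hi => ?_⟩
      by_contra h
      exact hj (Set.mem_biUnion hi fun h' => h (hsymm.symm _ _ h'))
  by_contra hne
  obtain ⟨N, hN⟩ := exists_lt_nsmul (sq_pos_of_ne_zero hne) (φ 0 ^ 2)
  rw [nsmul_eq_mul] at hN
  exact hN.not_ge (hφ.natCast_mul_sq_le (v := fun i : Fin N => v (s i)) (fun i => hm _)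
    fun i j hij => hs (Fin.val_injective.ne hij))

end IsPositiveDefinite

end PositiveDefinite

section CosetMean

variable {G V κ : Type*} [AddCommGroup G] [AddCommGroup V] [Fintype κ]
  {M : (G → ℝ) →ₗ[ℝ] ℝ} {φ : V → ℝ}

/-- The average of a function over the cosets of the image of `u`. -/
noncomputable def cosetMean (M : (G → ℝ) →ₗ[ℝ] ℝ) (u : G →+ V) : (V → ℝ) →ₗ[ℝ] (V → ℝ) :=
  LinearMap.pi fun x => M ∘ₗ LinearMap.funLeft ℝ ℝ fun s => x + u s

lemma cosetMean_apply (M : (G → ℝ) →ₗ[ℝ] ℝ) (u : G →+ V) (φ : V → ℝ) (x : V) :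
    cosetMean M u φ x = M fun s => φ (x + u s) :=
  rfl

lemma IsPositiveDefinite.gramForm_translate (hφ : IsPositiveDefinite φ) (u : G →+ V) (c : κ → ℝ)
    (x : κ → V) : IsPositiveDefinite fun s => gramForm c x fun y => φ (y + u s) where
  even s := by
    simp only [gramForm_apply, map_neg]
    rw [Finset.sum_comm]
    refine Finset.sum_congr rfl fun i _ => Finset.sum_congr rfl fun j _ => ?_
    rw [← hφ.even, mul_comm (c j)]
    congr 2
    abel
  gramForm_fin_nonneg {n} d s := by
    have hprod := hφ.gramForm_nonneg (fun p : Fin n × κ => d p.1 * c p.2)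
      fun p => x p.2 + u (s p.1)
    rw [gramForm_apply, Fintype.sum_prod_type] at hprod
    simp only [Fintype.sum_prod_type] at hprod
    convert hprod using 1
    simp only [gramForm_apply, Finset.mul_sum]
    refine Finset.sum_congr rfl fun a _ => ?_
    rw [Finset.sum_comm]
    refine Finset.sum_congr rfl fun i _ => Finset.sum_congr rfl fun b _ =>
      Finset.sum_congr rfl fun j _ => ?_
    rw [map_sub, add_sub_add_comm]
    ring

lemma gramForm_cosetMean (M : (G → ℝ) →ₗ[ℝ] ℝ) (u : G →+ V) (c : κ → ℝ) (x : κ → V) (φ : V → ℝ) :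
    gramForm c x (cosetMean M u φ) = M fun s => gramForm c x fun y => φ (y + u s) :=
  gramForm_map_mean M c x fun s y => φ (y + u s)

lemma cosetMean_even (hneg : IsInvariantUnder M (-·)) (hφ : IsPositiveDefinite φ) (u : G →+ V)
    (x : V) : cosetMean M u φ (-x) = cosetMean M u φ x := by
  have := hneg _ (comp_mem_boundedFunctions hφ.mem_boundedFunctions (x + u ·))
  rw [cosetMean_apply, cosetMean_apply, ← this]
  congr 1 with s
  rw [← hφ.even]
  congr 1
  rw [map_neg]
  abel

lemma IsPositiveDefinite.cosetMean (hM : IsTranslationInvariantMean M)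
    (hneg : IsInvariantUnder M (-·)) (hφ : IsPositiveDefinite φ) (u : G →+ V) :
    IsPositiveDefinite (cosetMean M u φ) where
  even := cosetMean_even hneg hφ u
  gramForm_fin_nonneg c x := by
    rw [gramForm_cosetMean]
    exact (hφ.gramForm_translate u c x).map_mean_nonneg hM

lemma IsPositiveDefinite.sub_cosetMean (hM : IsTranslationInvariantMean M)
    (hneg : IsInvariantUnder M (-·)) (hφ : IsPositiveDefinite φ) (u : G →+ V) :
    IsPositiveDefinite (φ - _root_.cosetMean M u φ) where
  even x := by rw [Pi.sub_apply, Pi.sub_apply, hφ.even, cosetMean_even hneg hφ]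
  gramForm_fin_nonneg c x := by
    have hle := (_root_.abs_le.1 (hM.abs_map_le (hφ.gramForm_translate u c x).abs_le)).2
    rw [map_sub, gramForm_cosetMean, sub_nonneg]
    simpa only [map_zero, add_zero] using hle

lemma cosetMean_add_map (hM : IsTranslationInvariantMean M) (hφ : φ ∈ boundedFunctions V)
    (u : G →+ V) (x : V) (t : G) : cosetMean M u φ (x + u t) = cosetMean M u φ x := by
  have := hM.translate t _ (comp_mem_boundedFunctions hφ (x + u ·))
  rw [cosetMean_apply, cosetMean_apply, ← this]
  congr 1 with s
  rw [map_add, add_right_comm, add_assoc]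

lemma cosetMean_sub_cosetMean_self (hM : IsTranslationInvariantMean M)
    (hφ : φ ∈ boundedFunctions V) (u : G →+ V) (x : V) :
    cosetMean M u (φ - cosetMean M u φ) x = 0 := by
  rw [map_sub, Pi.sub_apply, cosetMean_apply M u (cosetMean M u φ)]
  simp only [cosetMean_add_map hM hφ, hM.map_const, sub_self]

lemma cosetMean_zero_of_cosetMean_zero (hM : IsTranslationInvariantMean M)
    (hneg : IsInvariantUnder M (-·)) (hφ : IsPositiveDefinite φ) (u v : G →+ V)
    (hv : cosetMean M v φ 0 = 0) :
    cosetMean M v (cosetMean M u φ) 0 = 0 ∧ cosetMean M v (φ - cosetMean M u φ) 0 = 0 := by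
  have hsum : cosetMean M v (cosetMean M u φ) 0 + cosetMean M v (φ - cosetMean M u φ) 0 = 0 := by
    rw [← Pi.add_apply, ← map_add, add_sub_cancel, hv]
  exact (add_eq_zero_iff_of_nonneg ((hφ.cosetMean hM hneg u).cosetMean hM hneg v).map_zero_nonneg
    ((hφ.sub_cosetMean hM hneg u).cosetMean hM hneg v).map_zero_nonneg).1 hsum

end CosetMean

section Weights

variable {K ι : Type*} [Field K] {M : (K → ℝ) →ₗ[ℝ] ℝ} {φ : (ι → K) → ℝ} {e : ι → ℤ}

/-- Invariance under the torus action `a ↦ diag (a ^ e i)` of weights `e`. -/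
def IsWeightInvariant (e : ι → ℤ) (φ : (ι → K) → ℝ) : Prop :=
  ∀ a : K, a ≠ 0 → ∀ x, φ ((fun i => a ^ e i) * x) = φ x

lemma IsWeightInvariant.neg (h : IsWeightInvariant e φ) :
    IsWeightInvariant (-e) φ := fun a ha x => by
  simpa only [inv_zpow, zpow_neg, Pi.neg_apply] using h a⁻¹ (inv_ne_zero ha) x

lemma IsWeightInvariant.sub {ψ : (ι → K) → ℝ} (hφ : IsWeightInvariant e φ)
    (hψ : IsWeightInvariant e ψ) : IsWeightInvariant e (φ - ψ) := fun a ha x => by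
  rw [Pi.sub_apply, Pi.sub_apply, hφ a ha, hψ a ha]

lemma IsAffineMean.isInvariantUnder_neg (hM : IsAffineMean M) : IsInvariantUnder M (-·) := by
  simpa only [neg_one_mul] using hM.dilate (-1) (neg_ne_zero.2 one_ne_zero)

/-- The average of `φ` along the lines parallel to the `k`-th coordinate axis. -/
noncomputable abbrev axisMean (M : (K → ℝ) →ₗ[ℝ] ℝ) (k : ι) :
    ((ι → K) → ℝ) →ₗ[ℝ] ((ι → K) → ℝ) :=
  cosetMean M (AddMonoidHom.single (fun _ => K) k)

lemma IsWeightInvariant.axisMean (hM : IsAffineMean M) (hb : φ ∈ boundedFunctions (ι → K))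
    (hφ : IsWeightInvariant e φ) (k : ι) : IsWeightInvariant e (axisMean M k φ) := fun a ha x => by
  rw [cosetMean_apply, cosetMean_apply, ← hM.dilate (a ^ e k) (zpow_ne_zero _ ha) _
    (comp_mem_boundedFunctions hb _)]
  congr 1 with s
  rw [← hφ a ha (x + AddMonoidHom.single (fun _ => K) k s), mul_add]
  congr 2
  ext i
  by_cases h : i = k
  · subst h
    simp
  · simp [h]

end Weights

section PositiveWeights

open Polynomial

variable {K ι : Type*} [Field K] {M : (K → ℝ) →ₗ[ℝ] ℝ} {φ : (ι → K) → ℝ} {e : ι → ℤ}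

/-- The curve in `K ^ ι` parametrised by a family of polynomials. -/
noncomputable def polynomialCurve : (ι → K[X]) →+ (K → ι → K) where
  toFun f s i := (f i).eval s
  map_zero' := by ext; simp
  map_add' f g := by ext; simp

lemma polynomialCurve_apply (f : ι → K[X]) (s : K) (i : ι) :
    polynomialCurve f s i = (f i).eval s :=
  rfl

/-- The polynomial curve `f` acted upon by `t ^ j` and reparametrised by `s ↦ t ^ (-e i') s`: a
change of curve that does not affect averages of weight invariant functions, and that fixes the
`j`-th coefficient of `f i'`. -/
noncomputable def rescaledCurve (e : ι → ℤ) (i' : ι) (j : ℕ) (t : K) (f : ι → K[X]) : ι → K[X] :=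
  fun i => C ((t ^ j) ^ e i) * (f i).comp (C (t ^ (-e i')) * X)

lemma coeff_rescaledCurve {t : K} (ht : t ≠ 0) (i' : ι) (j : ℕ) (f : ι → K[X]) (i : ι) (l : ℕ) :
    (rescaledCurve e i' j t f i).coeff l = t ^ (j * e i - l * e i') * (f i).coeff l := by
  rw [rescaledCurve, coeff_C_mul, comp_C_mul_X_coeff, sub_eq_add_neg, zpow_add₀ ht, zpow_mul,
    zpow_natCast, ← mul_neg, mul_comm (l : ℤ), zpow_mul, zpow_natCast]
  ring

lemma map_rescaledCurve (hM : IsAffineMean M) (hb : φ ∈ boundedFunctions (ι → K))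
    (hφ : IsWeightInvariant e φ) {t : K} (ht : t ≠ 0) (i' : ι) (j : ℕ) (f : ι → K[X]) :
    (M fun s => φ (polynomialCurve (rescaledCurve e i' j t f) s)) =
      M fun s => φ (polynomialCurve f s) := by
  refine Eq.trans ?_ (hM.dilate (t ^ (-e i')) (zpow_ne_zero _ ht) _
    (comp_mem_boundedFunctions hb _))
  congr 1 with s
  rw [← hφ (t ^ j) (pow_ne_zero _ ht) (polynomialCurve f _)]
  congr 1 with i
  simp [polynomialCurve_apply, rescaledCurve]

lemma sum_card_support_rescaledCurve_sub_lt [Fintype ι] {t t' : K} (ht : t ≠ 0) (ht' : t' ≠ 0)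
    {i' : ι} {j : ℕ} {f : ι → K[X]} (hf : (f i').coeff j ≠ 0) :
    ∑ i, ((rescaledCurve e i' j t' f - rescaledCurve e i' j t f) i).support.card <
      ∑ i, (f i).support.card := by
  have hsub (i : ι) :
      ((rescaledCurve e i' j t' f - rescaledCurve e i' j t f) i).support ⊆ (f i).support := by
    intro l hl
    rw [mem_support_iff] at hl ⊢
    contrapose! hl
    simp [coeff_rescaledCurve ht, coeff_rescaledCurve ht', hl]
  refine Finset.sum_lt_sum (fun i _ => Finset.card_le_card (hsub i))
    ⟨i', Finset.mem_univ i', Finset.card_lt_card ⟨hsub i', fun hle => ?_⟩⟩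
  have := mem_support_iff.1 (hle (mem_support_iff.2 hf))
  simp [coeff_rescaledCurve ht, coeff_rescaledCurve ht'] at this

lemma map_polynomialCurve_eq_zero_of_affine (hM : IsAffineMean M) (hφ : IsPositiveDefinite φ)
    {i₀ : ι} (hi₀ : axisMean M i₀ φ 0 = 0) {f : ι → K[X]} (hcoeff : (f i₀).coeff 1 ≠ 0)
    (haffine : ∀ i j, 1 ≤ j → (f i).coeff j ≠ 0 → i = i₀ ∧ j = 1) :
    (M fun s => φ (polynomialCurve f s)) = 0 := by
  have hline (s : K) : polynomialCurve f s = polynomialCurve f 0 +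
      AddMonoidHom.single (fun _ => K) i₀ ((f i₀).coeff 1 * s) := by
    ext i
    rw [Pi.add_apply, polynomialCurve_apply, polynomialCurve_apply, AddMonoidHom.single_apply]
    have hdeg : (f i).natDegree ≤ 1 := natDegree_le_iff_coeff_eq_zero.2 fun j hj => by
      by_contra h
      exact hj.ne' (haffine i j hj.le h).2
    rw [eq_X_add_C_of_natDegree_le_one hdeg]
    by_cases h : i = i₀
    · subst h
      simp [add_comm]
    · have : (f i).coeff 1 = 0 := by
        by_contra h'
        exact h (haffine i 1 le_rfl h').1
      simp [h, this]
  have hpd := hφ.cosetMean hM.toIsTranslationInvariantMean hM.isInvariantUnder_neg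
    (AddMonoidHom.single (fun _ => K) i₀)
  calc M (fun s => φ (polynomialCurve f s))
      = M fun s => φ (polynomialCurve f 0 +
          AddMonoidHom.single (fun _ => K) i₀ ((f i₀).coeff 1 * s)) :=
        congrArg M (funext fun s => congrArg φ (hline s))
    _ = axisMean M i₀ φ (polynomialCurve f 0) :=
        hM.dilate _ hcoeff _ (comp_mem_boundedFunctions hφ.mem_boundedFunctions
          (polynomialCurve f 0 + AddMonoidHom.single (fun _ => K) i₀ ·))
    _ = 0 := hpd.eq_zero_of_map_zero hi₀ _

lemma finite_setOf_units_zpow_eq {n : ℤ} (hn : 0 < n) (c : K) :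
    {t : Kˣ | (t : K) ^ n = c}.Finite := by
  lift n to ℕ using hn.le
  refine ((nthRootsFinset n c).finite_toSet.preimage Units.val_injective.injOn).subset ?_
  intro t ht
  simpa [mem_nthRootsFinset (by exact_mod_cast hn : 0 < n)] using ht

theorem map_polynomialCurve_eq_zero [Finite ι] [Infinite K] (hM : IsAffineMean M)
    (hφ : IsPositiveDefinite φ) (he : Function.Injective e) (hφe : IsWeightInvariant e φ)
    {i₀ : ι} (hi₀ : axisMean M i₀ φ 0 = 0) {f : ι → K[X]} (hcoeff : (f i₀).coeff 1 ≠ 0)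
    (hpos : ∀ i, f i ≠ 0 → 0 < e i ∧ e i ≤ e i₀) :
    (M fun s => φ (polynomialCurve f s)) = 0 := by
  have := Fintype.ofFinite ι
  induction hn : ∑ i, (f i).support.card using Nat.strong_induction_on generalizing f with
  | _ n ih =>
  subst hn
  by_cases haffine : ∀ i j, 1 ≤ j → (f i).coeff j ≠ 0 → i = i₀ ∧ j = 1
  · exact map_polynomialCurve_eq_zero_of_affine hM hφ hi₀ hcoeff haffine
  push Not at haffine
  obtain ⟨i', j, hj, hcoeff', hne⟩ := haffine
  obtain ⟨hpos', hle'⟩ := hpos i' fun h => hcoeff' (by rw [h, coeff_zero])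
  have hexp : 0 < j * e i₀ - (1 : ℕ) * e i' := by
    rcases hj.eq_or_lt with rfl | hj
    · have : e i' ≠ e i₀ := fun h => hne (he h) rfl
      push_cast
      omega
    · have : (2 : ℤ) ≤ j := by exact_mod_cast hj
      push_cast
      nlinarith
  have := unitsEquivNeZero (G₀ := K).infinite_iff.2
    (Set.finite_singleton (0 : K)).infinite_compl.to_subtype
  refine ((hφ.mean_eval hM.toIsMean).comp_addMonoidHom
    polynomialCurve).eq_zero_of_forall_finite_map_sub_ne_zero
    (v := fun t : Kˣ => rescaledCurve e i' j (t : K) f)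
    (fun t => map_rescaledCurve hM hφ.mem_boundedFunctions hφe t.ne_zero i' j f) fun t => ?_
  refine (finite_setOf_units_zpow_eq hexp ((t : K) ^ (j * e i₀ - (1 : ℕ) * e i'))).subset ?_
  intro t' ht'
  by_contra hdist
  refine ht' (ih _ (sum_card_support_rescaledCurve_sub_lt t.ne_zero t'.ne_zero hcoeff') ?_ ?_ rfl)
  · rw [Pi.sub_apply, coeff_sub, coeff_rescaledCurve t.ne_zero, coeff_rescaledCurve t'.ne_zero,
      ← sub_mul]
    exact mul_ne_zero (sub_ne_zero.2 hdist) hcoeff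
  · refine fun i hi => hpos i fun h => hi ?_
    simp [rescaledCurve, h]

theorem eq_zero_of_forall_pos_weight [Finite ι] [Infinite K] (hM : IsAffineMean M)
    (hφ : IsPositiveDefinite φ) (he : Function.Injective e) (heK : ∀ i, (e i : K) ≠ 0)
    (hφe : IsWeightInvariant e φ) {x : ι → K} (hx : x ≠ 0) (hpos : ∀ i, x i ≠ 0 → 0 < e i)
    (haxis : ∀ i, x i ≠ 0 → axisMean M i φ 0 = 0) : φ x = 0 := by
  obtain ⟨i₀, hi₀, hmax⟩ := (Set.toFinite {i | x i ≠ 0}).exists_maximalFor e _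
    (Function.ne_iff.1 hx)
  have hcurve := map_polynomialCurve_eq_zero hM hφ he hφe (haxis i₀ hi₀)
    (f := fun i => C (x i) * (1 + X) ^ (e i).toNat) ?_ fun i hi => ?_
  · rw [← hcurve, ← hM.map_const (φ x)]
    refine hM.map_congr_off_finset {-1} fun s hs => ?_
    have hs : 1 + s ≠ 0 := by
      rwa [Finset.mem_singleton, eq_neg_iff_add_eq_zero, add_comm] at hs
    rw [← hφe _ hs]
    congr 1 with i
    by_cases h : x i = 0
    · simp [polynomialCurve_apply, h]
    · rw [Pi.mul_apply, ← Int.toNat_of_nonneg (hpos i h).le, zpow_natCast]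
      simp [polynomialCurve_apply, mul_comm]
  · have hcast : (e i₀ : K) = (e i₀).toNat := by
      rw [← Int.cast_natCast, Int.toNat_of_nonneg (hpos i₀ hi₀).le]
    rw [coeff_C_mul, coeff_one_add_X_pow, Nat.choose_one_right, ← hcast]
    exact mul_ne_zero hi₀ (heK i₀)
  · have hxi : x i ≠ 0 := fun h => hi (by rw [h, C_0, zero_mul])
    exact ⟨hpos i hxi, (le_total _ _).elim id (hmax hxi)⟩

theorem eq_zero_of_forall_neg_weight [Finite ι] [Infinite K] (hM : IsAffineMean M)
    (hφ : IsPositiveDefinite φ) (he : Function.Injective e) (heK : ∀ i, (e i : K) ≠ 0)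
    (hφe : IsWeightInvariant e φ) {x : ι → K} (hx : x ≠ 0) (hneg : ∀ i, x i ≠ 0 → e i < 0)
    (haxis : ∀ i, x i ≠ 0 → axisMean M i φ 0 = 0) : φ x = 0 :=
  eq_zero_of_forall_pos_weight (e := -e) hM hφ (neg_injective.comp he)
    (fun i => by simpa using heK i) hφe.neg hx (fun i hi => neg_pos.2 (hneg i hi)) haxis

end PositiveWeights

section Poles

open Polynomial

variable {K ι : Type*} [Field K]

/-- A partially defined rational function with a pole at `0`: it agrees with `P / Q` wherever `Q`
does not vanish. -/
def HasPoleAtZero (g : K → K) : Prop :=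
  ∃ P Q : K[X], P.eval 0 ≠ 0 ∧ Q.eval 0 = 0 ∧ Q ≠ 0 ∧ ∀ s, Q.eval s ≠ 0 → g s * Q.eval s = P.eval s

lemma hasPoleAtZero_zpow_mul {n : ℤ} (hn : n < 0) {c : K} (hc : c ≠ 0) :
    HasPoleAtZero fun s => s ^ n * c := by
  obtain ⟨m, rfl⟩ := Int.exists_eq_neg_ofNat hn.le
  have hm : m ≠ 0 := by omega
  refine ⟨C c, X ^ m, by simpa using hc, by simp [hm], pow_ne_zero _ X_ne_zero, fun s hs => ?_⟩
  rw [eval_pow, eval_X] at hs ⊢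
  simp only [zpow_neg, zpow_natCast, eval_C]
  field_simp

lemma HasPoleAtZero.exists_finset_forall_ne_zero {g : K → K} (hg : HasPoleAtZero g) :
    ∃ S : Finset K, ∀ s ∉ S, g s ≠ 0 := by
  obtain ⟨P, Q, hP, -, hQ, hPQ⟩ := hg
  have hP0 : P ≠ 0 := fun h => hP (by rw [h, eval_zero])
  refine ⟨(P * Q).roots.toFinset, fun s hs hgs => ?_⟩
  rw [Multiset.mem_toFinset, mem_roots (mul_ne_zero hP0 hQ), IsRoot.def, eval_mul,
    mul_eq_zero, not_or] at hs
  exact hs.1 (by rw [← hPQ s hs.2, hgs, zero_mul])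

lemma HasPoleAtZero.exists_finset_forall_translate_sub {g : K → K} (hg : HasPoleAtZero g) :
    ∃ S : Finset K, ∀ d ∉ S, HasPoleAtZero fun s => g (s + d) - g s := by
  obtain ⟨P, Q, hP, hQ0, hQ, hPQ⟩ := hg
  refine ⟨Q.roots.toFinset, fun d hd => ?_⟩
  rw [Multiset.mem_toFinset, mem_roots hQ, IsRoot.def] at hd
  refine ⟨taylor d P * Q - P * taylor d Q, taylor d Q * Q, ?_, ?_, ?_, fun s hs => ?_⟩
  · simp [taylor_eval, hQ0, hP, hd]
  · simp [hQ0]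
  · exact mul_ne_zero ((taylor_eq_zero d Q).not.2 hQ) hQ
  · simp only [eval_mul, eval_sub, taylor_eval] at hs ⊢
    rw [← hPQ s (right_ne_zero_of_mul hs), ← hPQ (s + d) (left_ne_zero_of_mul hs)]
    ring

lemma degree_taylor_sub_lt {P : K[X]} {n : ℕ} (hP : P.degree < (n + 1 : ℕ)) (d : K) :
    (taylor d P - P).degree < n := by
  rcases eq_or_ne P 0 with rfl | hP0
  · simp
  refine (degree_sub_lt_left (degree_taylor P d) ((taylor_eq_zero d P).not.2 hP0)
    (leadingCoeff_taylor d P)).trans_le ?_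
  rw [degree_taylor]
  rw [degree_eq_natDegree hP0] at hP ⊢
  exact_mod_cast Nat.lt_succ_iff.1 (by exact_mod_cast hP)

theorem map_eq_zero_of_hasPoleAtZero [Infinite K] {M : (K → ℝ) →ₗ[ℝ] ℝ}
    (hM : IsTranslationInvariantMean M) {φ : (ι → K) → ℝ} (hφ : IsPositiveDefinite φ) {N : Set ι}
    (hN : ∀ y ≠ 0, (∀ i ∉ N, y i = 0) → φ y = 0) {n : ℕ} {f : K → ι → K}
    (hpoly : ∀ i ∉ N, ∃ P : K[X], P.degree < n ∧ ∀ s, f s i = P.eval s) {i₁ : ι}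
    (hpole : HasPoleAtZero fun s => f s i₁) : (M fun s => φ (f s)) = 0 := by
  induction n generalizing f with
  | zero =>
    obtain ⟨S, hS⟩ := hpole.exists_finset_forall_ne_zero
    rw [← hM.map_const 0]
    refine hM.map_congr_off_finset S fun s hs =>
      hN (f s) (Function.ne_iff.2 ⟨i₁, hS s hs⟩) fun i hi => ?_
    obtain ⟨P, hP, hfP⟩ := hpoly i hi
    rw [hfP s, degree_eq_bot.1 (show P.degree = ⊥ by simpa using hP), eval_zero]
  | succ n ih =>
    obtain ⟨S, hS⟩ := hpole.exists_finset_forall_translate_sub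
    refine (hφ.mean_eval hM.toIsMean).eq_zero_of_forall_finite_map_sub_ne_zero
      (v := fun h s => f (s + h))
      (fun h => hM.translate h _ (comp_mem_boundedFunctions hφ.mem_boundedFunctions f)) fun h => ?_
    refine (S.finite_toSet.preimage (sub_left_injective (b := h)).injOn).subset fun h' hne => ?_
    by_contra hd
    have hshift := hM.translate h _ (comp_mem_boundedFunctions hφ.mem_boundedFunctions
      fun s => f (s + (h' - h)) - f s)
    simp only [add_assoc, add_sub_cancel] at hshift
    refine hne (hshift.trans (ih (fun i hi => ?_) (hS _ hd)))
    obtain ⟨P, hP, hfP⟩ := hpoly i hi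
    exact ⟨taylor (h' - h) P - P, degree_taylor_sub_lt hP _, fun s => by simp [hfP, taylor_eval]⟩

end Poles

section AllWeights

open Polynomial

variable {K ι : Type*} [Field K] [Infinite K] [Finite ι] {M : (K → ℝ) →ₗ[ℝ] ℝ}
  {φ : (ι → K) → ℝ} {e : ι → ℤ}

theorem eq_zero_of_forall_axisMean_eq_zero (hM : IsAffineMean M) (hφ : IsPositiveDefinite φ)
    (he : Function.Injective e) (heK : ∀ i, (e i : K) ≠ 0) (hφe : IsWeightInvariant e φ)
    {x : ι → K} (hx : x ≠ 0) (haxis : ∀ i, x i ≠ 0 → axisMean M i φ 0 = 0) : φ x = 0 := by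
  have he0 (i : ι) : e i ≠ 0 := fun h => heK i (by rw [h, Int.cast_zero])
  by_cases hpos : ∀ i, x i ≠ 0 → 0 < e i
  · exact eq_zero_of_forall_pos_weight hM hφ he heK hφe hx hpos haxis
  push Not at hpos
  obtain ⟨i₁, hxi₁, hei₁⟩ := hpos
  obtain ⟨n, hn⟩ := (Set.finite_range fun i => (e i).toNat).bddAbove
  have hcurve := map_eq_zero_of_hasPoleAtZero hM.toIsTranslationInvariantMean hφ
    (N := {i | x i ≠ 0 ∧ e i < 0}) (n := n + 1) (f := fun s i => s ^ e i * x i)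
    (fun y hy hyN => ?_) (fun i hi => ?_)
    (hasPoleAtZero_zpow_mul (lt_of_le_of_ne hei₁ (he0 i₁)) hxi₁)
  · rw [← hcurve, ← hM.map_const (φ x)]
    exact hM.map_congr_off_finset {0} fun s hs => (hφe s (Finset.notMem_singleton.1 hs) x).symm
  · have hmem (i : ι) (hi : y i ≠ 0) : x i ≠ 0 ∧ e i < 0 := by_contra fun h => hi (hyN i h)
    exact eq_zero_of_forall_neg_weight hM hφ he heK hφe hy (fun i hi => (hmem i hi).2)
      fun i hi => haxis i (hmem i hi).1
  · refine ⟨C (x i) * X ^ (e i).toNat, (degree_C_mul_X_pow_le _ _).trans_lt ?_, fun s => ?_⟩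
    · exact_mod_cast Nat.lt_succ_of_le (hn (Set.mem_range_self i))
    · by_cases hxi : x i = 0
      · simp [hxi]
      · have hei : 0 ≤ e i := not_lt.1 fun h => hi ⟨hxi, h⟩
        rw [eval_mul, eval_C, eval_pow, eval_X, mul_comm, ← zpow_natCast, Int.toNat_of_nonneg hei]

end AllWeights

section Nonnegativity

variable {K ι : Type*} [Field K] [Infinite K] [Finite ι] {M : (K → ℝ) →ₗ[ℝ] ℝ}
  {φ : (ι → K) → ℝ} {e : ι → ℤ}

lemma nonneg_of_forall_notMem_axisMean_eq_zero (hM : IsAffineMean M) (he : Function.Injective e)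
    (heK : ∀ i, (e i : K) ≠ 0) (hφ : IsPositiveDefinite φ) (hφe : IsWeightInvariant e φ)
    (S : Finset ι) {x : ι → K} (haxis : ∀ i ∉ S, x i ≠ 0 → axisMean M i φ 0 = 0) : 0 ≤ φ x := by
  have hT := hM.toIsTranslationInvariantMean
  have hneg := hM.isInvariantUnder_neg
  induction S using Finset.induction_on generalizing φ x with
  | empty =>
    rcases eq_or_ne x 0 with rfl | hx
    · exact hφ.map_zero_nonneg
    · exact (eq_zero_of_forall_axisMean_eq_zero hM hφ he heK hφe hx fun i =>
        haxis i (Finset.notMem_empty i)).ge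
  | insert k S _ ih =>
    let u := AddMonoidHom.single (fun _ : ι => K) k
    have hinv := hφe.axisMean hM hφ.mem_boundedFunctions k
    have hsplit {y : ι → K} {i : ι} (hik : i ≠ k) (hi : i ∉ S) (hyx : y i = x i) (hyi : y i ≠ 0) :=
      cosetMean_zero_of_cosetMean_zero hT hneg hφ u _
        (haxis i (Finset.mem_insert.not.2 (not_or.2 ⟨hik, hi⟩)) (hyx ▸ hyi))
    have hmean : 0 ≤ axisMean M k φ x := by
      rw [← cosetMean_add_map hT hφ.mem_boundedFunctions u x (-x k)]
      refine ih (hφ.cosetMean hT hneg u) hinv fun i hi hyi => ?_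
      have hik : i ≠ k := by
        rintro rfl
        exact hyi (by simp [u])
      exact (hsplit hik hi (by simp [u, hik]) hyi).1
    have hdiff : 0 ≤ (φ - axisMean M k φ) x := by
      refine ih (hφ.sub_cosetMean hT hneg u) (hφe.sub hinv) fun i hi hxi => ?_
      rcases eq_or_ne i k with rfl | hik
      · exact cosetMean_sub_cosetMean_self hT hφ.mem_boundedFunctions u 0
      · exact (hsplit hik hi rfl hxi).2
    exact hmean.trans (sub_nonneg.1 hdiff)

theorem IsWeightInvariant.nonneg (hφe : IsWeightInvariant e φ) (hφ : IsPositiveDefinite φ)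
    (he : Function.Injective e) (heK : ∀ i, (e i : K) ≠ 0) (x : ι → K) : 0 ≤ φ x := by
  obtain ⟨M, hM⟩ := exists_isAffineMean K
  have := Fintype.ofFinite ι
  exact nonneg_of_forall_notMem_axisMean_eq_zero hM he heK hφ hφe Finset.univ
    fun i hi => absurd (Finset.mem_univ i) hi

end Nonnegativity

section TorusMean

variable {K ι : Type*} [Field K] {M : (K → ℝ) →ₗ[ℝ] ℝ} {φ : (ι → K) → ℝ}

/-- The average of `φ` over the orbits of the torus action of weights `e`. -/
def torusMean (M : (K → ℝ) →ₗ[ℝ] ℝ) (e : ι → ℤ) (φ : (ι → K) → ℝ) (x : ι → K) : ℝ :=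
  M fun a => φ ((fun i => a ^ e i) * x)

lemma IsPositiveDefinite.torusMean (hM : IsMean M) (hφ : IsPositiveDefinite φ) (e : ι → ℤ) :
    IsPositiveDefinite (torusMean M e φ) :=
  mean hM (fun a => hφ.comp_addMonoidHom (AddMonoidHom.mulLeft fun i => a ^ e i)) (C := φ 0)
    fun _ => (congrArg φ (mul_zero _)).le

lemma isWeightInvariant_torusMean (hM : IsAffineMean M) (hb : φ ∈ boundedFunctions (ι → K))
    (e : ι → ℤ) : IsWeightInvariant e (torusMean M e φ) := fun b hb₀ x => by
  refine Eq.trans ?_ (hM.dilate b hb₀ _ (comp_mem_boundedFunctions hb _))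
  rw [torusMean]
  congr 1 with a
  congr 1 with i
  simp only [Pi.mul_apply, mul_zpow]
  ring

end TorusMean

section Reduction

variable {X A : Type*} [AddCommGroup A]

/-- The indicator function of `E`, normalised to have mean zero. -/
noncomputable def balancedIndicator (M : (X → ℝ) →ₗ[ℝ] ℝ) (E : Set X) : X → ℝ :=
  E.indicator 1 - fun _ => M (E.indicator 1)

lemma balancedIndicator_mem_boundedFunctions (M : (X → ℝ) →ₗ[ℝ] ℝ) (E : Set X) :
    balancedIndicator M E ∈ boundedFunctions X :=
  sub_mem (indicator_one_mem_boundedFunctions E)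
    ((boundedFunctions X).algebraMap_mem (M (E.indicator 1)))

lemma autocorrelation_balancedIndicator_of_notMem_sub {M : (A → ℝ) →ₗ[ℝ] ℝ}
    (hM : IsTranslationInvariantMean M) {E : Set A} {y : A} (hy : y ∉ E - E) :
    (M fun z => balancedIndicator M E z * balancedIndicator M E (z + y)) =
      -M (E.indicator 1) ^ 2 := by
  set d := M (E.indicator 1) with hd
  have hdisjoint (z : A) :
      E.indicator (1 : A → ℝ) z * E.indicator (1 : A → ℝ) (z + y) = 0 := by
    by_contra h
    have hz := Set.mem_of_indicator_ne_zero (left_ne_zero_of_mul h)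
    have hzy := Set.mem_of_indicator_ne_zero (right_ne_zero_of_mul h)
    exact hy (Set.mem_sub.2 ⟨z + y, hzy, z, hz, add_sub_cancel_left z y⟩)
  have hexpand : (fun z => balancedIndicator M E z * balancedIndicator M E (z + y)) =
      (fun _ => d ^ 2) - d • (E.indicator 1 + fun z => E.indicator 1 (z + y)) := by
    ext z
    simp only [balancedIndicator, Pi.sub_apply, Pi.smul_apply, Pi.add_apply, smul_eq_mul]
    linear_combination hdisjoint z
  rw [hexpand, map_sub, map_smul, map_add, hM.map_const,
    hM.translate y _ (indicator_one_mem_boundedFunctions E), ← hd, smul_eq_mul]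
  ring

theorem PosUpperBanachDensity.exists_map_zpow_mem_sub {K ι : Type*} [Field K] [Infinite K]
    [Finite ι] {E : Set A} (hE : PosUpperBanachDensity E) (L : (ι → K) →+ A) {e : ι → ℤ}
    (he : Function.Injective e) (heK : ∀ i, (e i : K) ≠ 0) :
    ∃ a : K, a ≠ 0 ∧ L (fun i => a ^ e i) ∈ E - E := by
  obtain ⟨M, hM, hpos⟩ := hE.exists_isTranslationInvariantMean
  obtain ⟨T, hT⟩ := exists_isAffineMean K
  by_contra! hcon
  have hφ := (IsPositiveDefinite.autocorrelation hM
    (balancedIndicator_mem_boundedFunctions M E)).comp_addMonoidHom L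
  have hnonneg := (isWeightInvariant_torusMean hT hφ.mem_boundedFunctions e).nonneg
    (hφ.torusMean hT.toIsMean e) he heK 1
  refine hnonneg.not_gt (lt_of_eq_of_lt ?_ (neg_neg_of_pos (pow_pos hpos 2)))
  rw [← hT.map_const (-M (E.indicator 1) ^ 2)]
  refine hT.map_congr_off_finset {0} fun a ha => ?_
  rw [mul_one]
  exact autocorrelation_balancedIndicator_of_notMem_sub hM (hcon a (Finset.notMem_singleton.1 ha))

lemma exists_eq_mul_expChar_pow (K : Type*) [Field K] (q : ℕ) [hq : ExpChar K q] {k : ℤ}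
    (hk : k ≠ 0) : ∃ (m : ℤ) (j : ℕ), k = m * (q ^ j : ℕ) ∧ (m : K) ≠ 0 := by
  cases hq with
  | zero => exact ⟨k, 0, by simp, by exact_mod_cast hk⟩
  | prime hq =>
    have hfin : FiniteMultiplicity (q : ℤ) k :=
      Int.finiteMultiplicity_iff.2 ⟨by simpa using hq.ne_one, hk⟩
    obtain ⟨m, hkm, hm⟩ := hfin.exists_eq_pow_mul_and_not_dvd
    refine ⟨m, multiplicity (q : ℤ) k, ?_, (CharP.intCast_eq_zero_iff K q m).not.2 hm⟩
    rw [Nat.cast_pow, mul_comm]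
    exact hkm

lemma exists_addMonoidHom_zpow_eq_sum {K : Type*} [Field K] (p : ℤ → K) {S : Finset ℤ}
    (hS : ∀ k ∈ S, k ≠ 0) :
    ∃ (T : Finset ℤ) (L : (T → K) →+ K), (∀ m ∈ T, (m : K) ≠ 0) ∧
      ∀ a : K, L (fun m => a ^ (m : ℤ)) = ∑ k ∈ S, p k * a ^ k := by
  obtain ⟨q, hq⟩ := ExpChar.exists K
  choose m j hkm hm using fun k : S => exists_eq_mul_expChar_pow K q (hS k k.2)
  let T : Finset ℤ := Finset.univ.image m
  let coord (k : S) : T := ⟨m k, Finset.mem_image_of_mem m (Finset.mem_univ k)⟩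
  refine ⟨T, ∑ k : S, (AddMonoidHom.mulLeft (p k)).comp
    ((iterateFrobenius K q (j k)).toAddMonoidHom.comp (Pi.evalAddMonoidHom _ (coord k))), ?_,
    fun a => ?_⟩
  · rintro _ hmT
    obtain ⟨k, -, rfl⟩ := Finset.mem_image.1 hmT
    exact hm k
  · rw [AddMonoidHom.finsetSum_apply, ← Finset.sum_coe_sort S fun k => p k * a ^ k]
    refine Finset.sum_congr rfl fun k _ => ?_
    change p k * iterateFrobenius K q (j k) (a ^ m k) = p k * a ^ (k : ℤ)
    rw [iterateFrobenius_def, ← zpow_natCast, ← zpow_mul, ← hkm]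

end Reduction

/-- A Furstenberg–Sárközy theorem for Laurent polynomials: if `E ⊆ K` has positive upper
Banach density and `p(X) = ∑_{k=-N}^{N} p_k X^k` is a Laurent polynomial over `K` with
`p₀ = 0`, then `p(a) ∈ E − E` for some `a ∈ K^*`. -/
theorem statement13
    {K : Type*} [Field K] [Countable K] [Infinite K]
    (E : Set K) (hE : PosUpperBanachDensity E)
    (N : ℕ) (p : ℤ → K) (hp0 : p 0 = 0) :
    ∃ a : K, a ≠ 0 ∧ (∑ k ∈ Finset.Icc (-(N : ℤ)) (N : ℤ), p k * a ^ k) ∈ E - E := by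
  obtain ⟨T, L, hT, hL⟩ := exists_addMonoidHom_zpow_eq_sum p
    (S := (Finset.Icc (-(N : ℤ)) N).erase 0) fun _ => Finset.ne_of_mem_erase
  obtain ⟨a, ha, hmem⟩ :=
    hE.exists_map_zpow_mem_sub L Subtype.val_injective fun m => hT m m.2
  rw [hL, Finset.sum_erase _ (by rw [hp0, zero_mul])] at hmem
  exact ⟨a, ha, hmem⟩
end

section
/- Let K be a countable field and suppose there exists a Følner sequence (F_n) in the additive group (K,+) such that ((F_n \ {0})^{-1}) is also a Følner sequence in (K,+). Then the projective linear group PGL₂(K) = GL₂(K)/center is amenable, i.e., it admits a (left) Følner sequence. -/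
open Filter Topology
open scoped Classical MatrixGroups

/-- A left Følner sequence in a (countable, multiplicative) group. -/
def IsMulFolner {G : Type*} [Group G] (F : ℕ → Finset G) : Prop :=
  (∀ n, (F n).Nonempty) ∧
    ∀ g : G, Tendsto
      (fun n => ((F n ∩ (F n).image (g * ·)).card : ℝ) / ((F n).card : ℝ)) atTop (𝓝 1)

/-- The projective linear group `PGL₂(K) = GL₂(K)/center`. -/
abbrev PGL2 (K : Type*) [Field K] : Type _ :=
  GL (Fin 2) K ⧸ Subgroup.center (GL (Fin 2) K)

/-!
Along a Følner sequence all cosets of an additive subgroup have asymptotically the same density, so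
a subgroup of infinite index has density zero. A valuation subring `V ≠ K` has infinite additive
index, because a subring of finite index is closed under inverses. Since `x ∈ V` or `x⁻¹ ∈ V` for
every `x`, the densities of `V` along `F n` and along `(F n \ {0})⁻¹` add up to at least one, so
they cannot both tend to zero: hence `K` has no proper valuation subring. The integral closure of
`ℤ` in `K` is an intersection of valuation subrings, so it is all of `K`. This excludes
characteristic zero and makes `K` locally finite; then `GL n K` and its quotients are locally
finite, and in a countable locally finite group, finite subgroups containing longer and longer
initial segments of an enumeration form a Følner sequence.
-/

open scoped Finset Pointwise

section RelDensity

variable {α β : Type*}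

/-- The proportion of the elements of a finite set `F` that lie in `s`, with the value `0` for
empty `F`. -/
noncomputable def relDensity (F : Finset α) (s : Set α) : ℝ :=
  #{x ∈ F | x ∈ s} / #F

lemma relDensity_nonneg (F : Finset α) (s : Set α) : 0 ≤ relDensity F s := by
  unfold relDensity
  positivity

lemma sum_relDensity_fiber_le_one (F : Finset α) (f : α → β) (T : Finset β) :
    ∑ b ∈ T, relDensity F (f ⁻¹' {b}) ≤ 1 := by
  have fibers_le : ∑ b ∈ T, #{x ∈ F | f x = b} ≤ #F := by
    rw [← Finset.card_biUnion (Set.pairwiseDisjoint_filter f T F)]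
    exact Finset.card_le_card (Finset.biUnion_subset.2 fun _ _ ↦ Finset.filter_subset _ F)
  simp only [relDensity, Set.mem_preimage, Set.mem_singleton_iff, ← Finset.sum_div]
  exact div_le_one_of_le₀ (mod_cast fibers_le) (Nat.cast_nonneg _)

end RelDensity

section Folner

variable {A : Type*} [AddCommGroup A]

lemma card_filter_mem_add_card_inter_image_le (F : Finset A) (V : AddSubgroup A) (a : A) :
    #{x ∈ F | x ∈ V} + #(F ∩ F.image (· + a)) ≤
      #{x ∈ F | QuotientAddGroup.mk (s := V) x = a} + #F := by
  set P := ({x ∈ F | x ∈ V} : Finset A).image (· + a)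
  set Q := F ∩ F.image (· + a)
  have card_translate (s : Finset A) : #(s.image (· + a)) = #s :=
    Finset.card_image_of_injective s (add_left_injective a)
  have inter_subset : P ∩ Q ⊆ ({x ∈ F | QuotientAddGroup.mk (s := V) x = a} : Finset A) := by
    intro x hx
    obtain ⟨hxP, hxQ⟩ := Finset.mem_inter.1 hx
    obtain ⟨v, hv, rfl⟩ := Finset.mem_image.1 hxP
    have hvV : (v : A ⧸ V) = 0 := (QuotientAddGroup.eq_zero_iff v).2 (Finset.mem_filter.1 hv).2
    exact Finset.mem_filter.2 ⟨(Finset.mem_inter.1 hxQ).1, by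
      rw [QuotientAddGroup.mk_add, hvV, zero_add]⟩
  have union_subset : P ∪ Q ⊆ F.image (· + a) :=
    Finset.union_subset (Finset.image_subset_image (Finset.filter_subset _ F))
      Finset.inter_subset_right
  calc #{x ∈ F | x ∈ V} + #Q = #(P ∩ Q) + #(P ∪ Q) := by
        rw [Finset.card_inter_add_card_union, card_translate]
    _ ≤ #{x ∈ F | QuotientAddGroup.mk (s := V) x = a} + #F :=
        add_le_add (Finset.card_le_card inter_subset)
          ((Finset.card_le_card union_subset).trans_eq (card_translate F))

lemma relDensity_add_overlap_le (F : Finset A) (V : AddSubgroup A) (a : A) :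
    relDensity F V + (#(F ∩ F.image (· + a)) : ℝ) / #F ≤
      relDensity F (QuotientAddGroup.mk (s := V) ⁻¹' {(a : A ⧸ V)}) + 1 := by
  rcases F.eq_empty_or_nonempty with rfl | hF
  · simp [relDensity]
  have card_pos : (0 : ℝ) < #F := mod_cast hF.card_pos
  simp only [relDensity, SetLike.mem_coe, Set.mem_preimage, Set.mem_singleton_iff]
  rw [← add_div, div_add_one card_pos.ne']
  exact div_le_div_of_nonneg_right
    (mod_cast card_filter_mem_add_card_inter_image_le F V a) card_pos.le

lemma card_mul_relDensity_le (F : Finset A) (V : AddSubgroup A) (T : Finset (A ⧸ V)) :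
    #T * relDensity F V ≤ 1 + ∑ q ∈ T, (1 - (#(F ∩ F.image (· + q.out)) : ℝ) / #F) := by
  have le_coset (q : A ⧸ V) : relDensity F V ≤ relDensity F (QuotientAddGroup.mk ⁻¹' {q}) +
      (1 - (#(F ∩ F.image (· + q.out)) : ℝ) / #F) := by
    have := relDensity_add_overlap_le F V q.out
    rw [QuotientAddGroup.out_eq'] at this
    linarith
  calc #T * relDensity F V = ∑ _q ∈ T, relDensity F V := by rw [Finset.sum_const, nsmul_eq_mul]
    _ ≤ ∑ q ∈ T, relDensity F (QuotientAddGroup.mk ⁻¹' {q}) +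
          ∑ q ∈ T, (1 - (#(F ∩ F.image (· + q.out)) : ℝ) / #F) := by
        rw [← Finset.sum_add_distrib]
        exact Finset.sum_le_sum fun q _ ↦ le_coset q
    _ ≤ 1 + ∑ q ∈ T, (1 - (#(F ∩ F.image (· + q.out)) : ℝ) / #F) := by
        gcongr
        exact sum_relDensity_fiber_le_one F QuotientAddGroup.mk T

namespace IsAddFolner

variable {F : ℕ → Finset A}

lemma countable (hF : IsAddFolner F) : Countable A := by
  have mem_differences (a : A) : ∃ n, a ∈ F n - F n := by
    obtain ⟨n, hn⟩ := ((hF.2 a).eventually_ne one_ne_zero).exists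
    have overlap_nonempty : (F n ∩ (F n).image (· + a)).Nonempty := by
      rw [Finset.nonempty_iff_ne_empty]
      intro h
      simp only [h, Finset.card_empty, Nat.cast_zero, zero_div, ne_eq, not_true] at hn
    obtain ⟨x, hx⟩ := overlap_nonempty
    obtain ⟨hxF, hx⟩ := Finset.mem_inter.1 hx
    obtain ⟨y, hyF, rfl⟩ := Finset.mem_image.1 hx
    exact ⟨n, Finset.mem_sub.2 ⟨y + a, hxF, y, hyF, add_sub_cancel_left y a⟩⟩
  rw [← Set.countable_univ_iff]
  exact (Set.countable_iUnion fun n ↦ (F n - F n).countable_toSet).mono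
    fun a _ ↦ Set.mem_iUnion.2 (mem_differences a)

lemma tendsto_relDensity_zero (hF : IsAddFolner F) (V : AddSubgroup A) [Infinite (A ⧸ V)] :
    Tendsto (fun n ↦ relDensity (F n) V) atTop (𝓝 0) := by
  have eventually_le (k : ℕ) : ∀ᶠ n in atTop, k * relDensity (F n) V ≤ 2 := by
    obtain ⟨T, rfl⟩ := Infinite.exists_subset_card_eq (A ⧸ V) k
    have defects_tendsto : Tendsto
        (fun n ↦ ∑ q ∈ T, (1 - (#(F n ∩ (F n).image (· + q.out)) : ℝ) / #(F n))) atTop (𝓝 0) := by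
      simpa only [sub_self, Finset.sum_const_zero] using
        tendsto_finsetSum T fun q _ ↦ (hF.2 q.out).const_sub 1
    filter_upwards [defects_tendsto.eventually_le_const one_pos] with n hn
    linarith [card_mul_relDensity_le (F n) V T]
  refine tendsto_order.2
    ⟨fun c hc ↦ .of_forall fun n ↦ hc.trans_le (relDensity_nonneg _ _), fun ε hε ↦ ?_⟩
  obtain ⟨k, hk⟩ := exists_nat_gt (2 / ε)
  have k_pos : (0 : ℝ) < k := (div_pos two_pos hε).trans hk
  filter_upwards [eventually_le k] with n hn
  exact lt_of_mul_lt_mul_left (hn.trans_lt ((div_lt_iff₀ hε).1 hk)) k_pos.le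

end IsAddFolner

end Folner

section ValuationSubring

lemma inv_mem_of_mem_of_finiteIndex {D : Type*} [DivisionRing D] (S : Subring D)
    [S.toAddSubgroup.FiniteIndex] {x : D} (hx : x ∈ S) : x⁻¹ ∈ S := by
  rcases eq_or_ne x 0 with rfl | hx0
  · rwa [inv_zero]
  set u := Units.mk0 x hx0
  have smul_le : u • S.toAddSubgroup ≤ S.toAddSubgroup := by
    rintro _ ⟨y, hy, rfl⟩
    exact S.mul_mem hx hy
  have : (u • S.toAddSubgroup).FiniteIndex :=
    ⟨(AddSubgroup.index_smul u _).trans_ne AddSubgroup.FiniteIndex.index_ne_zero⟩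
  have smul_eq : u • S.toAddSubgroup = S.toAddSubgroup :=
    smul_le.eq_of_not_lt fun hlt ↦
      (AddSubgroup.index_strictAnti hlt).ne (AddSubgroup.index_smul u _).symm
  obtain ⟨y, hy, hxy : x * y = 1⟩ := smul_eq.ge S.one_mem
  rwa [← eq_inv_of_mul_eq_one_right hxy]

variable {K : Type*} [Field K]

lemma valuationSubring_eq_top_of_finiteIndex (V : ValuationSubring K)
    [V.toSubring.toAddSubgroup.FiniteIndex] : V = ⊤ := by
  refine eq_top_iff.2 fun x _ ↦ (V.mem_or_inv_mem x).elim id fun hx ↦ ?_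
  simpa using inv_mem_of_mem_of_finiteIndex V.toSubring hx

lemma one_le_relDensity_add_relDensity_inv (V : ValuationSubring K) {F : Finset K}
    (hF : (F.erase 0).Nonempty) :
    1 ≤ relDensity F V + relDensity ((F.erase 0).image (·⁻¹)) V := by
  set F' := (F.erase 0).image (·⁻¹)
  have card_F'_le : #F' ≤ #F := Finset.card_image_le.trans Finset.card_erase_le
  have cover : F ⊆ ({x ∈ F | x ∈ V} : Finset K) ∪ ({x ∈ F' | x ∈ V} : Finset K).image (·⁻¹) := by
    intro x hx
    by_cases hxV : x ∈ V
    · exact Finset.mem_union_left _ (Finset.mem_filter.2 ⟨hx, hxV⟩)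
    have hx0 : x ≠ 0 := fun h ↦ hxV (h ▸ V.zero_mem)
    have inv_mem_F' : x⁻¹ ∈ F' := Finset.mem_image_of_mem _ (Finset.mem_erase.2 ⟨hx0, hx⟩)
    have inv_mem_V : x⁻¹ ∈ V := (V.mem_or_inv_mem x).resolve_left hxV
    exact Finset.mem_union_right _ (Finset.mem_image.2
      ⟨x⁻¹, Finset.mem_filter.2 ⟨inv_mem_F', inv_mem_V⟩, inv_inv x⟩)
  have card_le : #F ≤ #{x ∈ F | x ∈ V} + #{x ∈ F' | x ∈ V} :=
    (Finset.card_le_card cover).trans <| (Finset.card_union_le _ _).trans <|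
      Nat.add_le_add_left Finset.card_image_le _
  have card_F_pos : (0 : ℝ) < #F := mod_cast (hF.mono (Finset.erase_subset _ _)).card_pos
  have card_F'_pos : (0 : ℝ) < #F' := mod_cast (hF.image _).card_pos
  calc (1 : ℝ) ≤ (#{x ∈ F | x ∈ V} + #{x ∈ F' | x ∈ V}) / #F := by
        rw [one_le_div card_F_pos]
        exact mod_cast card_le
    _ = relDensity F V + #{x ∈ F' | x ∈ V} / #F := add_div _ _ _
    _ ≤ relDensity F V + relDensity F' V := by
        exact add_le_add_right
          (div_le_div_of_nonneg_left (Nat.cast_nonneg _) card_F'_pos (mod_cast card_F'_le)) _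

lemma valuationSubring_eq_top_of_isAddFolner_inv {F : ℕ → Finset K} (hF : IsAddFolner F)
    (hFinv : IsAddFolner fun n ↦ ((F n).erase 0).image (·⁻¹)) (V : ValuationSubring K) :
    V = ⊤ := by
  by_contra hV
  have : Infinite (K ⧸ V.toSubring.toAddSubgroup) := by
    rw [← AddSubgroup.index_eq_zero_iff_infinite]
    by_contra hindex
    have : V.toSubring.toAddSubgroup.FiniteIndex := ⟨hindex⟩
    exact hV (valuationSubring_eq_top_of_finiteIndex V)
  have densities_tendsto := (hF.tendsto_relDensity_zero V.toSubring.toAddSubgroup).add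
    (hFinv.tendsto_relDensity_zero V.toSubring.toAddSubgroup)
  have one_le : (1 : ℝ) ≤ 0 + 0 := ge_of_tendsto' densities_tendsto fun n ↦
    one_le_relDensity_add_relDensity_inv V (Finset.image_nonempty.1 (hFinv.1 n))
  norm_num at one_le

lemma isIntegral_of_forall_valuationSubring_eq_top {R : Type*} [CommRing R] [Algebra R K]
    (h : ∀ V : ValuationSubring K, (algebraMap R K).range ≤ V.toSubring → V = ⊤) :
    Algebra.IsIntegral R K := by
  refine ⟨fun x ↦ ?_⟩
  by_contra hx
  have x_notMem : x ∉ (integralClosure R K).toSubring := hx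
  obtain ⟨V, closure_le, x_notMem_V⟩ :=
    Subring.exists_le_valuationSubring_of_isIntegrallyClosedIn x_notMem
  have range_le : (algebraMap R K).range ≤ V.toSubring := by
    rintro _ ⟨r, rfl⟩
    exact closure_le ((integralClosure R K).algebraMap_mem r)
  exact x_notMem_V (h V range_le ▸ ValuationSubring.mem_top x)

end ValuationSubring

section LocallyFinite

/-- A ring is locally finite if each of its finite subsets lies in a finite subring. -/
def IsLocallyFiniteRing (R : Type*) [Ring R] : Prop :=
  ∀ s : Set R, s.Finite → ∃ S : Subring R, Finite S ∧ s ⊆ S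

/-- A group is locally finite if each of its finite subsets lies in a finite subgroup. -/
def IsLocallyFiniteGroup (G : Type*) [Group G] : Prop :=
  ∀ s : Set G, s.Finite → ∃ H : Subgroup G, Finite H ∧ s ⊆ H

lemma not_charZero_of_isIntegral_int (K : Type*) [Field K] [Algebra.IsIntegral ℤ K] :
    ¬CharZero K := fun _ ↦
  Int.not_isField <| isField_of_isIntegral_of_isField
    (algebraMap ℤ K).injective_int (Field.toIsField K)

namespace IsLocallyFiniteRing

variable {R : Type*}

lemma of_isIntegral_int [CommRing R] [Algebra.IsIntegral ℤ R] (p : ℕ) [NeZero p] [CharP R p] :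
    IsLocallyFiniteRing R := by
  intro s hs
  let := ZMod.algebra R p
  have fg := fg_adjoin_of_finite (R := ZMod p) hs fun x _ ↦
    (Algebra.IsIntegral.isIntegral (R := ℤ) x).tower_top
  have : Module.Finite (ZMod p) (Algebra.adjoin (ZMod p) s) := Module.Finite.iff_fg.2 fg
  exact ⟨(Algebra.adjoin (ZMod p) s).toSubring, Module.finite_of_finite (ZMod p),
    Algebra.subset_adjoin⟩

lemma matrix [Ring R] (hR : IsLocallyFiniteRing R) (n : Type*) [Fintype n] [DecidableEq n] :
    IsLocallyFiniteRing (Matrix n n R) := by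
  intro s hs
  obtain ⟨S, hS, entries_mem⟩ := hR (⋃ M ∈ s, Set.range fun ij : n × n ↦ M ij.1 ij.2)
    (hs.biUnion fun M _ ↦ Set.finite_range _)
  refine ⟨S.matrix, ?_, fun M hM i j ↦ entries_mem (Set.mem_biUnion hM ⟨(i, j), rfl⟩)⟩
  exact Finite.of_injective (fun (M : S.matrix) i j ↦ (⟨M.1 i j, M.2 i j⟩ : S)) fun M N h ↦
    Subtype.ext <| Matrix.ext fun i j ↦ congrArg Subtype.val (congrFun₂ h i j)

lemma units [Ring R] (hR : IsLocallyFiniteRing R) : IsLocallyFiniteGroup Rˣ := by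
  intro s hs
  obtain ⟨S, hS, hsS⟩ := hR (Units.val '' (s ∪ s⁻¹)) ((hs.union hs.inv).image _)
  refine ⟨S.toSubmonoid.units, ?_, fun u hu ↦ ⟨?_, ?_⟩⟩
  · have : Finite S.toSubmonoid := hS
    exact Finite.of_equiv _ S.toSubmonoid.unitsEquivUnitsType.symm.toEquiv
  · exact hsS ⟨u, .inl hu, rfl⟩
  · exact hsS ⟨u⁻¹, .inr (Set.inv_mem_inv.2 hu), rfl⟩

end IsLocallyFiniteRing

namespace IsLocallyFiniteGroup

variable {G H : Type*} [Group G] [Group H]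

lemma of_surjective (hG : IsLocallyFiniteGroup G) {f : G →* H} (hf : Function.Surjective f) :
    IsLocallyFiniteGroup H := by
  intro s hs
  obtain ⟨L, hL, hsL⟩ := hG (Function.surjInv hf '' s) (hs.image _)
  exact ⟨L.map f, (Set.toFinite (f '' L)).to_subtype, fun x hx ↦
    ⟨_, hsL ⟨x, hx, rfl⟩, Function.surjInv_eq hf x⟩⟩

lemma exists_isMulFolner [Countable G] (hG : IsLocallyFiniteGroup G) :
    ∃ F : ℕ → Finset G, IsMulFolner F := by
  obtain ⟨e, he⟩ := exists_surjective_nat G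
  choose L hL initial_subset using fun n ↦ hG (e '' Set.Iic n) ((Set.finite_Iic n).image e)
  let F (n : ℕ) : Finset G := (Set.toFinite (L n : Set G)).toFinset
  have F_nonempty (n : ℕ) : (F n).Nonempty := ⟨1, by simp [F]⟩
  refine ⟨F, F_nonempty, fun g ↦ tendsto_const_nhds.congr' ?_⟩
  obtain ⟨k, rfl⟩ := he g
  filter_upwards [eventually_ge_atTop k] with n hn
  have image_eq : (F n).image (e k * ·) = F n := by
    rw [← Finset.coe_inj, Finset.coe_image, Set.Finite.coe_toFinset]
    exact smul_coe_set (initial_subset n ⟨k, hn, rfl⟩)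
  rw [image_eq, Finset.inter_self, div_self (mod_cast (F_nonempty n).card_pos.ne')]

end IsLocallyFiniteGroup

lemma isLocallyFiniteRing_of_isAddFolner_inv {K : Type*} [Field K] {F : ℕ → Finset K}
    (hF : IsAddFolner F) (hFinv : IsAddFolner fun n ↦ ((F n).erase 0).image (·⁻¹)) :
    IsLocallyFiniteRing K := by
  have : Algebra.IsIntegral ℤ K := isIntegral_of_forall_valuationSubring_eq_top fun V _ ↦
    valuationSubring_eq_top_of_isAddFolner_inv hF hFinv V
  obtain ⟨p, _⟩ := CharP.exists K
  have : NeZero p := ⟨by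
    rintro rfl
    exact not_charZero_of_isIntegral_int K (CharP.charP_to_charZero K)⟩
  exact .of_isIntegral_int p

end LocallyFinite

theorem statement14_general {K : Type*} [Field K] (F : ℕ → Finset K) (hF : IsAddFolner F)
    (hFinv : IsAddFolner (fun n => ((F n).erase 0).image (·⁻¹)))
    {n : Type*} [Fintype n] [DecidableEq n] (N : Subgroup (GL n K)) [N.Normal] :
    ∃ G : ℕ → Finset (GL n K ⧸ N), IsMulFolner G := by
  have : Countable K := hF.countable
  have : Countable (Matrix n n K) := inferInstanceAs (Countable (n → n → K))
  have : Countable (GL n K) := Units.val_injective.countable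
  have : Countable (GL n K ⧸ N) := (QuotientGroup.mk'_surjective N).countable
  have gl_locallyFinite : IsLocallyFiniteGroup (GL n K) :=
    ((isLocallyFiniteRing_of_isAddFolner_inv hF hFinv).matrix n).units
  exact (gl_locallyFinite.of_surjective (QuotientGroup.mk'_surjective N)).exists_isMulFolner

/-- If a countable field `K` admits an additive Følner sequence `(F_n)` such that
`((F_n \ {0})⁻¹)` is also an additive Følner sequence, then `PGL₂(K)` is amenable, i.e.,
admits a left Følner sequence. -/
theorem statement14
    {K : Type*} [Field K] [Countable K]
    (F : ℕ → Finset K) (hF : IsAddFolner F)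
    (hFinv : IsAddFolner (fun n => ((F n).erase 0).image (·⁻¹))) :
    ∃ G : ℕ → Finset (PGL2 K), IsMulFolner G :=
  statement14_general F hF hFinv (Subgroup.center (GL (Fin 2) K))
end

section
/- Let K be a countably infinite field and let n₁,…,n_r be distinct nonzero integers, none divisible by the characteristic of K. Then the subgroup Γ = {(a^{n₁},…,a^{n_r}) : a ∈ K*} of (K*)^r is coupling-resistant: the only Γ-invariant probability measure on K̂^r (for the coordinatewise dual actions) whose marginal on each factor is the Haar measure m_{K̂} is the product measure m_{K̂} ⊗ ⋯ ⊗ m_{K̂}. -/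
open MeasureTheory Filter

noncomputable section

/-- The Pontryagin dual of the additive group of `K`. -/
abbrev AddDual (K : Type*) [AddCommGroup K] [TopologicalSpace K] : Type _ :=
  PontryaginDual (Multiplicative K)

/-- Precomposition of a character with an additive homomorphism. -/
def dualComp {A B : Type*} [AddCommGroup A] [AddCommGroup B]
    [TopologicalSpace A] [DiscreteTopology A] [TopologicalSpace B]
    (f : A →+ B) (ξ : AddDual B) : AddDual A :=
  ξ.comp ⟨AddMonoidHom.toMultiplicative f, continuous_of_discreteTopology⟩

/-- The dual action of multiplication by `a`: `(dualSmul a ξ) b = ξ (a * b)`. -/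
def dualSmul {K : Type*} [Field K] [TopologicalSpace K] [DiscreteTopology K]
    (a : K) (ξ : AddDual K) : AddDual K :=
  dualComp (AddMonoidHom.mulLeft a) ξ

/-!
The Fourier–Stieltjes transform `φ` of `θ` on `K ^ r` is invariant under `Γ`, and the marginal
condition makes it vanish at nonzero vectors with a single nonzero coordinate. If `φ w ≠ 0`, then
`x ↦ φ (x ^ k • w)`, where `x ^ k` acts as an element of `Γ`, is a nonzero constant away from
`x = 0`, so it is not null for averages over translates in `(K, +)`. However, `φ` is positive
definite, so the van der Corput inequality reduces nullness of `φ ∘ v` to nullness of `φ ∘ Δ_[h] v`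
for almost all `h`. Iterating, it is enough that some number of differences kills all but one
coordinate of `v`.

For positive exponents this is possible although in characteristic `p` the map `x ↦ x ^ e` may
be killed by fewer than `e + 1` differences: its functional degree is the sum of the base `p` digits
of `e`, and a multiplier `k` for which the digit sum of `k * n` exceeds that of `k * n'` for all
`n' < n` singles out the largest exponent. Negative exponents are reduced to this by `a ↦ a⁻¹`, and
if both signs occur, a coordinate with a pole survives any number of differences while all
polynomial ones die.
-/

section Digits

lemma sum_digits_add_mul {q r : ℕ} (hr : r < q) (a : ℕ) :
    (q.digits (r + q * a)).sum = r + (q.digits a).sum := by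
  rcases Nat.lt_or_ge 1 q with hq | hq
  · by_cases h : r ≠ 0 ∨ a ≠ 0
    · rw [Nat.digits_add q hq r a hr h, List.sum_cons]
    · obtain ⟨rfl, rfl⟩ : r = 0 ∧ a = 0 := by tauto
      simp
  · obtain rfl : q = 1 := by omega
    simp_all

lemma sum_digits_succ {q n : ℕ} (h : q ∣ n + 1 → q = 1) :
    (q.digits (n + 1)).sum = (q.digits n).sum + 1 := by
  rcases eq_or_ne q 1 with rfl | hq1
  · simp
  replace h := mt h hq1
  rcases q.eq_zero_or_pos with rfl | hq
  · cases n <;> simp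
  have hr : n % q + 1 < q := by
    refine lt_of_le_of_ne (Nat.mod_lt n hq) fun hr => h ⟨n / q + 1, ?_⟩
    linarith [Nat.mod_add_div n q]
  rw [← Nat.mod_add_div n q, add_right_comm, sum_digits_add_mul hr,
    sum_digits_add_mul (Nat.mod_lt n hq), add_right_comm]

lemma sum_digits_add_sum_digits_of_add_succ_eq_pow {q : ℕ} (hq : 1 < q) {m e e' : ℕ}
    (h : e + e' + 1 = q ^ m) :
    (q.digits e).sum + (q.digits e').sum = m * (q - 1) := by
  induction m generalizing e e' with
  | zero =>
    obtain ⟨rfl, rfl⟩ : e = 0 ∧ e' = 0 := by rw [pow_zero] at h; omega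
    simp
  | succ m ih =>
    have hr := Nat.mod_lt e hq.pos
    have hr' := Nat.mod_lt e' hq.pos
    have hdecomp : e % q + e' % q + 1 + q * (e / q + e' / q) = q * q ^ m := by
      linarith [Nat.mod_add_div e q, Nat.mod_add_div e' q, pow_succ' q m]
    obtain ⟨c, hc⟩ : q ∣ e % q + e' % q + 1 :=
      (Nat.dvd_add_left (dvd_mul_right q _)).1 (hdecomp ▸ dvd_mul_right q _)
    obtain rfl : c = 1 := by
      have : 0 < c := Nat.pos_of_ne_zero fun h0 => by simp [h0] at hc
      have : c < 2 := by nlinarith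
      omega
    have hquot : e / q + e' / q + 1 = q ^ m := by
      refine Nat.eq_of_mul_eq_mul_left hq.pos ?_
      linarith
    have hs := ih hquot
    rw [← Nat.mod_add_div e q, ← Nat.mod_add_div e' q, sum_digits_add_mul hr,
      sum_digits_add_mul hr', Nat.succ_mul]
    omega

lemma sum_digits_pos {q n : ℕ} (hn : 0 < n) : 0 < (q.digits n).sum := by
  refine Nat.pos_of_ne_zero fun h => Nat.getLast_digit_ne_zero q hn.ne' ?_
  exact List.sum_eq_zero_iff.1 h _ (List.getLast_mem _)

lemma exists_forall_lt_sum_digits_mul_lt {q n : ℕ} (hq : 0 < q) (hn : q.Coprime n) :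
    ∃ k, ∀ n' < n, (q.digits (k * n')).sum < (q.digits (k * n)).sum := by
  rcases n.eq_zero_or_pos with rfl | hn0
  · exact ⟨1, by simp⟩
  obtain rfl | hq1 : q = 1 ∨ 1 < q := by omega
  · exact ⟨1, by simp⟩
  -- Choose `k` with `k * n = q ^ m - 1`: all `m` digits are then `q - 1`, so `k * n'` lacks the
  -- digit sum of `k * (n - n')`, which is positive.
  obtain ⟨k, hk⟩ : n ∣ q ^ n.totient - 1 :=
    (Nat.modEq_iff_dvd' (Nat.one_le_pow _ _ hq)).1 (Nat.ModEq.pow_totient hn).symm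
  set m := n.totient
  have hm : 1 < q ^ m := Nat.one_lt_pow (Nat.totient_pos.2 hn0).ne' hq1
  have hkn : k * n + 0 + 1 = q ^ m := by rw [mul_comm]; omega
  have hk0 : 0 < k := Nat.pos_of_ne_zero (by rintro rfl; omega)
  refine ⟨k, fun n' hn' => ?_⟩
  have hmax := sum_digits_add_sum_digits_of_add_succ_eq_pow (e' := 0) hq1 hkn
  have hcompl : k * n' + k * (n - n') + 1 = q ^ m := by
    rw [← mul_add, Nat.add_sub_cancel' hn'.le, ← hkn, add_zero]
  have hlt := sum_digits_add_sum_digits_of_add_succ_eq_pow hq1 hcompl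
  have hpos : 0 < (q.digits (k * (n - n'))).sum :=
    sum_digits_pos (Nat.mul_pos hk0 (Nat.sub_pos_of_lt hn'))
  simp only [Nat.digits_zero, List.sum_nil, add_zero] at hmax
  omega

end Digits

open scoped fwdDiff

section FunctionalDegree

section Module

variable {A : Type*} (R M : Type*) [AddCommGroup A] [Ring R] [AddCommGroup M] [Module R M]

/-- The functions `f : A → M` of functional degree less than `d`, that is, those all of whose
`d`-fold differences vanish. Vanishing is only asked for outside a finite set, so that rational
functions can be handled through their values away from the poles. -/
def functionalDegreeLT (A : Type*) [AddCommGroup A] : ℕ → Submodule R (A → M)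
  | 0 =>
    { carrier := {f | f =ᶠ[cofinite] 0}
      zero_mem' := by simp
      add_mem' := fun {f g} (hf : f =ᶠ[cofinite] 0) (hg : g =ᶠ[cofinite] 0) =>
        show f + g =ᶠ[cofinite] 0 by simpa using hf.add hg
      smul_mem' := fun c f (hf : f =ᶠ[cofinite] 0) =>
        show c • f =ᶠ[cofinite] 0 by simpa using EventuallyEq.const_smul hf c }
  | d + 1 => ⨅ h : A, (functionalDegreeLT A d).comap
      (LinearMap.funLeft R M (· + h) - LinearMap.id)

variable {R M}

lemma mem_functionalDegreeLT_zero {f : A → M} :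
    f ∈ functionalDegreeLT R M A 0 ↔ f =ᶠ[cofinite] 0 :=
  Iff.rfl

lemma mem_functionalDegreeLT_succ {d : ℕ} {f : A → M} :
    f ∈ functionalDegreeLT R M A (d + 1) ↔ ∀ h, Δ_[h] f ∈ functionalDegreeLT R M A d := by
  rw [functionalDegreeLT, Submodule.mem_iInf]
  rfl

lemma fwdDiff_comm (h h' : A) (f : A → M) : Δ_[h] (Δ_[h'] f) = Δ_[h'] (Δ_[h] f) := by
  funext x
  simp only [fwdDiff, add_right_comm x h h']
  abel

lemma eventually_cofinite_add_right {p : A → Prop} (hp : ∀ᶠ x in cofinite, p x) (h : A) :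
    ∀ᶠ x in cofinite, p (x + h) :=
  (add_left_injective h).tendsto_cofinite.eventually hp

lemma functionalDegreeLT_mono : Monotone (functionalDegreeLT R M A) := by
  refine monotone_nat_of_le_succ fun d => ?_
  induction d with
  | zero =>
    intro f hf
    refine mem_functionalDegreeLT_succ.2 fun h => ?_
    filter_upwards [hf, eventually_cofinite_add_right hf h] with x hx hxh
    simp only [fwdDiff, hx, hxh, Pi.zero_apply, sub_zero]
  | succ d ih => exact iInf_mono fun h => Submodule.comap_mono ih

lemma const_mem_functionalDegreeLT_one (c : M) :
    (fun _ => c) ∈ functionalDegreeLT R M A 1 :=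
  mem_functionalDegreeLT_succ.2 fun h => by
    rw [fwdDiff_const]
    exact Submodule.zero_mem _

end Module

section Field

variable {K : Type*} [Field K] {d : ℕ} {f : K → K}

lemma id_mul_mem_functionalDegreeLT (hf : f ∈ functionalDegreeLT K K K d) :
    (fun x => x * f x) ∈ functionalDegreeLT K K K (d + 1) := by
  induction d generalizing f with
  | zero =>
    refine functionalDegreeLT_mono zero_le_one ?_
    rw [mem_functionalDegreeLT_zero]
    filter_upwards [hf] with x hx
    simp only [hx, Pi.zero_apply, mul_zero]
  | succ d ih =>
    refine mem_functionalDegreeLT_succ.2 fun h => ?_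
    have leibniz : Δ_[h] (fun x => x * f x) = (fun x => x * Δ_[h] f x) + h • (f + Δ_[h] f) := by
      funext x
      simp only [fwdDiff, Pi.add_apply, Pi.smul_apply, smul_eq_mul]
      ring
    rw [leibniz]
    have hΔ := mem_functionalDegreeLT_succ.1 hf h
    exact add_mem (ih hΔ)
      (Submodule.smul_mem _ _ (add_mem hf (functionalDegreeLT_mono d.le_succ hΔ)))

lemma pow_expChar_mem_functionalDegreeLT_iff (q : ℕ) [ExpChar K q] :
    (fun x => f x ^ q) ∈ functionalDegreeLT K K K d ↔ f ∈ functionalDegreeLT K K K d := by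
  induction d generalizing f with
  | zero =>
    simp only [mem_functionalDegreeLT_zero, EventuallyEq, Pi.zero_apply,
      pow_eq_zero_iff (expChar_pos K q).ne']
  | succ d ih =>
    have frobenius_comm (h : K) : Δ_[h] (fun x => f x ^ q) = fun x => (Δ_[h] f x) ^ q := by
      funext x
      simp only [fwdDiff, sub_pow_expChar]
    simp only [mem_functionalDegreeLT_succ, frobenius_comm, ih]

lemma coeff_mem_of_frequently_sum_pow_smul_mem {V : Type*} [AddCommGroup V]
    [Module K V] (S : Submodule K V) {n : ℕ} (c : ℕ → V)
    (hc : ∃ᶠ t : K in cofinite, ∑ m ∈ Finset.range n, t ^ m • c m ∈ S)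
    {m : ℕ} (hm : m < n) : c m ∈ S := by
  by_contra hcm
  obtain ⟨ℓ, hℓ, hS⟩ := S.exists_le_ker_of_notMem hcm
  let p : Polynomial K := ∑ m ∈ Finset.range n, Polynomial.monomial m (ℓ (c m))
  have hp : p = 0 := by
    refine Polynomial.eq_zero_of_infinite_isRoot p ?_
    refine (frequently_cofinite_iff_infinite.1 hc).mono fun t ht => ?_
    have := LinearMap.mem_ker.1 (hS ht)
    simpa [p, Polynomial.eval_finsetSum, mul_comm] using this
  have hcoeff : p.coeff m = ℓ (c m) := by
    simp [p, Polynomial.finsetSum_coeff, Polynomial.coeff_monomial, hm]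
  exact hℓ (by rw [← hcoeff, hp, Polynomial.coeff_zero])

lemma pow_mem_functionalDegreeLT_of_succ [Infinite K] {n : ℕ} (hn : ((n + 1 : ℕ) : K) ≠ 0)
    (hmem : (fun x : K => x ^ (n + 1)) ∈ functionalDegreeLT K K K (d + 1)) :
    (fun x : K => x ^ n) ∈ functionalDegreeLT K K K d := by
  let c (m : ℕ) : K → K := fun x => ((n + 1).choose (m + 1) : K) * x ^ (n - m)
  have binomial (h : K) :
      Δ_[h] (fun x => x ^ (n + 1)) = h • ∑ m ∈ Finset.range (n + 1), h ^ m • c m := by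
    funext x
    simp only [fwdDiff, add_comm x h, add_pow, c, Pi.smul_apply, Finset.sum_apply, smul_eq_mul,
      Finset.mul_sum]
    rw [Finset.sum_range_succ', sub_eq_iff_eq_add]
    congr 1
    · refine Finset.sum_congr rfl fun m _ => ?_
      rw [Nat.add_sub_add_right]
      ring
    · simp
  have hcoeff : c 0 ∈ functionalDegreeLT K K K d := by
    refine coeff_mem_of_frequently_sum_pow_smul_mem (n := n + 1) _ c (Eventually.frequently ?_)
      n.succ_pos
    filter_upwards [eventually_cofinite_ne 0] with h hh
    rw [← Submodule.smul_mem_iff _ hh, ← binomial]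
    exact mem_functionalDegreeLT_succ.1 hmem h
  rw [← Submodule.smul_mem_iff _ hn]
  convert hcoeff using 1
  funext x
  simp [c]

lemma coprime_of_natCast_ne_zero (q : ℕ) [ExpChar K q] {n : ℕ} (hn : (n : K) ≠ 0) :
    q.Coprime n := by
  cases ‹ExpChar K q› with
  | zero => exact Nat.coprime_one_left n
  | prime hq => exact hq.coprime_iff_not_dvd.2 fun h => hn ((CharP.cast_eq_zero_iff K q n).2 h)

lemma pow_mem_functionalDegreeLT_iff [Infinite K] (q : ℕ) [ExpChar K q] (e d : ℕ) :
    (fun x : K => x ^ e) ∈ functionalDegreeLT K K K d ↔ (q.digits e).sum < d := by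
  have hzero (e : ℕ) : (fun x : K => x ^ e) ∉ functionalDegreeLT K K K 0 := fun h => by
    obtain ⟨x, hx, hx0⟩ := ((mem_functionalDegreeLT_zero.1 h).and (eventually_cofinite_ne 0)).exists
    exact pow_ne_zero e hx0 hx
  induction e using Nat.strong_induction_on generalizing d with
  | _ e ih =>
  rcases d with _ | d
  · simpa using hzero e
  rcases e with _ | n
  · simpa using functionalDegreeLT_mono (Nat.le_add_left 1 d) (const_mem_functionalDegreeLT_one 1)
  by_cases hn : ((n + 1 : ℕ) : K) = 0
  · obtain ⟨hq, e', he'⟩ : q.Prime ∧ q ∣ n + 1 := by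
      cases ‹ExpChar K q› with
      | zero => exact absurd hn (Nat.cast_ne_zero.2 n.succ_ne_zero)
      | prime hq => exact ⟨hq, (CharP.cast_eq_zero_iff K q _).1 hn⟩
    have hlt : e' < n + 1 := by nlinarith [hq.two_le]
    have hdigits : (q.digits (q * e')).sum = (q.digits e').sum := by
      simpa using sum_digits_add_mul hq.pos e'
    rw [he', hdigits, (ih e' hlt (d + 1)).symm]
    simp only [mul_comm q, pow_mul]
    exact pow_expChar_mem_functionalDegreeLT_iff q
  · rw [sum_digits_succ (coprime_of_natCast_ne_zero q hn).eq_one_of_dvd, Nat.add_lt_add_iff_right,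
      (ih n n.lt_succ_self d).symm]
    refine ⟨pow_mem_functionalDegreeLT_of_succ hn, fun h => ?_⟩
    simpa only [pow_succ'] using id_mul_mem_functionalDegreeLT h

end Field
end FunctionalDegree

section Quotient
open Polynomial

variable {K : Type*} [Field K] {f : K → K} {P Q : K[X]}

/-- `f` is the rational function `P / Q`, outside a finite set of arguments. The equation is
multiplied out, so that the value of `f` at a pole does not matter. -/
def IsQuotient (f : K → K) (P Q : K[X]) : Prop :=
  Q ≠ 0 ∧ ∀ᶠ x in cofinite, f x * Q.eval x = P.eval x

lemma eventually_eval_ne_zero (hP : P ≠ 0) : ∀ᶠ x in cofinite, P.eval x ≠ 0 :=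
  (finite_setOfPred_isRoot hP).subset fun x hx => by simpa using hx

lemma eq_of_frequently_eval_eq (h : ∃ᶠ x in cofinite, P.eval x = Q.eval x) : P = Q :=
  eq_of_infinite_eval_eq P Q (frequently_cofinite_iff_infinite.1 h)

namespace IsQuotient

lemma fwdDiff (hf : IsQuotient f P Q) (h : K) :
    IsQuotient (Δ_[h] f) (taylor h P * Q - P * taylor h Q) (taylor h Q * Q) := by
  refine ⟨mul_ne_zero ((taylor_eq_zero h Q).not.2 hf.1) hf.1, ?_⟩
  filter_upwards [hf.2, eventually_cofinite_add_right hf.2 h] with x hx hxh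
  simp only [_root_.fwdDiff, eval_sub, eval_mul, taylor_eval, ← hx, ← hxh]
  ring

lemma eventually_ne_zero (hf : IsQuotient f P Q) (h0 : ¬ f =ᶠ[cofinite] 0) :
    ∀ᶠ x in cofinite, f x ≠ 0 := by
  have hP : P ≠ 0 := by
    rintro rfl
    refine h0 ?_
    filter_upwards [hf.2, eventually_eval_ne_zero hf.1] with x hx hQ
    simpa [hQ] using hx
  filter_upwards [hf.2, eventually_eval_ne_zero hP] with x hx hPx hfx
  exact hPx (by rw [← hx, hfx, zero_mul])

variable [Infinite K]

lemma num_eq_zero (hf : IsQuotient f P Q) (h0 : f =ᶠ[cofinite] 0) : P = 0 := by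
  refine eq_of_frequently_eval_eq (Eventually.frequently ?_)
  filter_upwards [hf.2, h0] with x hx hfx
  simp [← hx, hfx]

lemma exists_eventuallyEq_const (hf : IsQuotient f P Q)
    (h : ∃ᶠ h in cofinite, Δ_[h] f =ᶠ[cofinite] 0) : ∃ c, f =ᶠ[cofinite] fun _ => c := by
  obtain ⟨x₀, hx₀⟩ := (eventually_eval_ne_zero hf.1).exists
  have hPQ : taylor x₀ (C (Q.eval x₀) * P) = taylor x₀ (C (P.eval x₀) * Q) := by
    refine eq_of_frequently_eval_eq (h.mono fun h hh => ?_)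
    have hcross := congrArg (eval x₀) ((hf.fwdDiff h).num_eq_zero hh)
    simp only [eval_sub, eval_mul, taylor_eval, eval_zero] at hcross
    simp only [taylor_eval, eval_mul, eval_C, add_comm h]
    linear_combination hcross
  replace hPQ := taylor_injective x₀ hPQ
  refine ⟨P.eval x₀ / Q.eval x₀, ?_⟩
  filter_upwards [hf.2, eventually_eval_ne_zero hf.1] with x hx hQ
  have hPQx := congrArg (eval x) hPQ
  simp only [eval_mul, eval_C, ← hx] at hPQx
  rw [eq_div_iff hx₀]
  exact mul_right_cancel₀ hQ (by linear_combination hPQx)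

lemma eventually_fwdDiff_notMem {d : ℕ} (hf : IsQuotient f P Q)
    (hd : f ∉ functionalDegreeLT K K K (d + 1)) :
    ∀ᶠ h in cofinite, Δ_[h] f ∉ functionalDegreeLT K K K d := by
  induction d generalizing f P Q with
  | zero =>
    by_contra hfreq
    obtain ⟨c, hc⟩ := hf.exists_eventuallyEq_const
      ((not_eventually.1 hfreq).mono fun h => not_not.1)
    have hsub : f - (fun _ => c) ∈ functionalDegreeLT K K K 0 := by
      rw [mem_functionalDegreeLT_zero]
      simpa using hc.sub (EventuallyEq.refl _ fun _ => c)
    refine hd ?_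
    rw [← sub_add_cancel f fun _ => c]
    exact add_mem (functionalDegreeLT_mono zero_le_one hsub) (const_mem_functionalDegreeLT_one c)
  | succ d ih =>
    obtain ⟨h₀, hh₀⟩ := not_forall.1 (mt mem_functionalDegreeLT_succ.2 hd)
    filter_upwards [ih (hf.fwdDiff h₀) hh₀] with h hh hmem
    refine hh ?_
    rw [fwdDiff_comm]
    exact mem_functionalDegreeLT_succ.1 hmem h₀

lemma eventuallyEq_zero_of_mem {d : ℕ} (hf : IsQuotient f P Q) (hdeg : P.degree < Q.degree)
    (hd : f ∈ functionalDegreeLT K K K d) : f =ᶠ[cofinite] 0 := by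
  induction d generalizing f P Q with
  | zero => exact hd
  | succ d ih =>
    have hdeg_fwdDiff (h : K) :
        (taylor h P * Q - P * taylor h Q).degree < (taylor h Q * Q).degree := by
      have hQ : Q.degree ≠ ⊥ := degree_ne_bot.2 hf.1
      refine (degree_sub_le _ _).trans_lt (max_lt ?_ ?_) <;>
        simpa only [degree_mul, degree_taylor] using WithBot.add_lt_add_right hQ hdeg
    have hΔ (h : K) : Δ_[h] f =ᶠ[cofinite] 0 :=
      ih (hf.fwdDiff h) (hdeg_fwdDiff h) (mem_functionalDegreeLT_succ.1 hd h)
    obtain ⟨c, hc⟩ := hf.exists_eventuallyEq_const (.of_forall hΔ)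
    have hPQ : C c * Q = P := by
      refine eq_of_frequently_eval_eq (Eventually.frequently ?_)
      filter_upwards [hc, hf.2] with x hcx hx
      rw [eval_mul, eval_C, ← hcx, hx]
    have hc0 : c = 0 := by
      by_contra hne
      rw [← hPQ, degree_C_mul hne] at hdeg
      exact hdeg.false
    rwa [hc0] at hc

end IsQuotient
end Quotient

section MeanNull
open scoped BigOperators

variable {A 𝕜 : Type*} [AddCommGroup A] [RCLike 𝕜]

section Average

variable {ι κ : Type*} [Fintype ι] [Fintype κ]

lemma expect_add_prod (f : A → 𝕜) (a : ι → A) (b : κ → A) (x : A) :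
    𝔼 p : ι × κ, f (x + (a p.1 + b p.2)) = 𝔼 i, 𝔼 j, f (x + a i + b j) := by
  simp only [← Finset.univ_product_univ, Finset.expect_product, add_assoc]

lemma norm_expect_le_of_forall_norm_le [Nonempty ι] {f : ι → 𝕜} {ε : ℝ} (h : ∀ i, ‖f i‖ ≤ ε) :
    ‖𝔼 i, f i‖ ≤ ε :=
  (RCLike.norm_expect_le (K := 𝕜)).trans
    (Finset.expect_le Finset.univ_nonempty fun i _ => h i)

end Average

variable (𝕜 A) in
/-- The functions that have uniformly arbitrarily small averages over finite families of
translates. They replace the kernel of an invariant mean on the discrete group `A`. -/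
def meanNull : Submodule 𝕜 (A → 𝕜) where
  carrier := {f | ∀ ε > 0, ∃ (ι : Type) (_ : Fintype ι) (_ : Nonempty ι) (a : ι → A),
    ∀ x, ‖𝔼 i, f (x + a i)‖ ≤ ε}
  zero_mem' ε hε := ⟨Unit, inferInstance, inferInstance, 0, by simp [hε.le]⟩
  add_mem' {f g} hf hg ε hε := by
    obtain ⟨ι, _, _, a, ha⟩ := hf (ε / 2) (half_pos hε)
    obtain ⟨κ, _, _, b, hb⟩ := hg (ε / 2) (half_pos hε)
    refine ⟨ι × κ, inferInstance, inferInstance, fun p => a p.1 + b p.2, fun x => ?_⟩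
    have hfab : ‖𝔼 p : ι × κ, f (x + (a p.1 + b p.2))‖ ≤ ε / 2 := by
      rw [expect_add_prod, Finset.expect_comm]
      refine norm_expect_le_of_forall_norm_le fun j => ?_
      simpa only [add_right_comm x] using ha (x + b j)
    have hgab : ‖𝔼 p : ι × κ, g (x + (a p.1 + b p.2))‖ ≤ ε / 2 := by
      rw [expect_add_prod]
      exact norm_expect_le_of_forall_norm_le fun i => hb (x + a i)
    simp only [Pi.add_apply, Finset.expect_add_distrib]
    exact (norm_add_le_of_le hfab hgab).trans_eq (add_halves ε)
  smul_mem' c f hf ε hε := by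
    have hc : 0 < ‖c‖ + 1 := by positivity
    obtain ⟨ι, _, _, a, ha⟩ := hf (ε / (‖c‖ + 1)) (div_pos hε hc)
    refine ⟨ι, inferInstance, inferInstance, a, fun x => ?_⟩
    simp only [Pi.smul_apply, ← Finset.smul_expect, norm_smul]
    calc ‖c‖ * ‖𝔼 i, f (x + a i)‖ ≤ (‖c‖ + 1) * (ε / (‖c‖ + 1)) := by
          gcongr
          · exact le_add_of_nonneg_right zero_le_one
          · exact ha x
      _ = ε := mul_div_cancel₀ _ hc.ne'

lemma translate_mem_meanNull {f : A → 𝕜} (hf : f ∈ meanNull A 𝕜) (h : A) :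
    (fun x => f (x + h)) ∈ meanNull A 𝕜 := by
  intro ε hε
  obtain ⟨ι, _, _, a, ha⟩ := hf ε hε
  refine ⟨ι, inferInstance, inferInstance, a, fun x => ?_⟩
  simpa only [add_right_comm] using ha (x + h)

lemma eq_zero_of_const_mem_meanNull {c : 𝕜} (hc : (fun _ => c) ∈ meanNull A 𝕜) : c = 0 := by
  refine norm_le_zero_iff.1 (le_of_forall_gt_imp_ge_of_dense fun ε hε => ?_)
  obtain ⟨ι, _, _, a, ha⟩ := hc ε hε
  simpa only [Fintype.expect_const] using ha 0

section Infinite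

variable [Infinite A]

lemma single_mem_meanNull [DecidableEq A] (s : A) (c : 𝕜) : Pi.single s c ∈ meanNull A 𝕜 := by
  intro ε hε
  obtain ⟨N, hN⟩ := exists_nat_gt (‖c‖ / ε)
  refine ⟨Fin (N + 1), inferInstance, inferInstance, fun i => Infinite.natEmbedding A i,
    fun x => ?_⟩
  have hinj (i j : Fin (N + 1)) (hi : x + Infinite.natEmbedding A i = s)
      (hj : x + Infinite.natEmbedding A j = s) : i = j :=
    Fin.ext ((Infinite.natEmbedding A).injective (add_left_cancel (hi.trans hj.symm)))
  simp only [Pi.single_apply]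
  rw [Fintype.expect_ite_zero _ hinj]
  split_ifs
  · rw [RCLike.norm_nnqsmul 𝕜, Fintype.card_fin, NNRat.smul_def]
    rw [div_lt_iff₀ hε] at hN
    push_cast
    rw [inv_mul_le_iff₀ (by positivity)]
    linarith
  · simpa using hε.le

lemma mem_meanNull_of_eventuallyEq_zero {f : A → 𝕜} (hf : f =ᶠ[cofinite] 0) :
    f ∈ meanNull A 𝕜 := by
  classical
  have hfin : {x | ¬ f x = 0}.Finite := hf
  have hsum : f = ∑ s ∈ hfin.toFinset, Pi.single s (f s) := by
    funext x
    rw [Finset.sum_apply]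
    simp [Finset.sum_pi_single]
  rw [hsum]
  exact sum_mem fun s _ => single_mem_meanNull s _

lemma eq_zero_of_mem_meanNull_of_eventuallyEq_const {f : A → 𝕜} {c : 𝕜} (hf : f ∈ meanNull A 𝕜)
    (hc : f =ᶠ[cofinite] fun _ => c) : c = 0 := by
  have hsub : f - (fun _ => c) ∈ meanNull A 𝕜 := mem_meanNull_of_eventuallyEq_zero
    (by simpa using hc.sub (EventuallyEq.refl _ fun _ => c))
  refine eq_zero_of_const_mem_meanNull (A := A) ?_
  simpa only [sub_sub_cancel] using sub_mem hf hsub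

lemma exists_seq_pairwise_sub {p : A → Prop} (hp : ∀ᶠ h in cofinite, p h) :
    ∃ a : ℕ → A, Pairwise fun i j => p (a j - a i) := by
  have hsymm : Std.Symm fun x y => p (y - x) ∧ p (x - y) := ⟨fun _ _ => And.symm⟩
  obtain ⟨a, -, ha⟩ := exists_seq_of_forall_finset_exists' (fun _ : A => True)
    (fun x y => p (y - x) ∧ p (x - y)) fun s _ => by
      have hgood : ∀ᶠ y in cofinite, ∀ x ∈ s, p (y - x) ∧ p (x - y) := by
        refine (Finset.eventually_all s).2 fun x _ => ?_
        exact (sub_left_injective.tendsto_cofinite.eventually hp).and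
          (sub_right_injective.tendsto_cofinite.eventually hp)
      simpa using hgood.exists
  exact ⟨a, fun i j hij => (ha hij).1⟩

end Infinite

section VanDerCorput

open scoped InnerProductSpace

lemma mem_meanNull_of_forall_norm_expect_sq_le {f : A → 𝕜}
    (hf : ∀ ε > 0, ∃ (κ : Type) (_ : Fintype κ) (_ : Nonempty κ) (b : κ → A),
      ∃ g ∈ meanNull A 𝕜, ∀ x, ‖𝔼 j, f (x + b j)‖ ^ 2 ≤ RCLike.re (g x) + ε) :
    f ∈ meanNull A 𝕜 := by
  intro ε hε
  obtain ⟨κ, _, _, b, g, hg, hfg⟩ := hf (ε ^ 2 / 2) (by positivity)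
  obtain ⟨ι, _, _, a, ha⟩ := hg (ε ^ 2 / 2) (by positivity)
  refine ⟨ι × κ, inferInstance, inferInstance, fun p => a p.1 + b p.2, fun x => ?_⟩
  have hre : RCLike.re (𝔼 i, g (x + a i)) ≤ ε ^ 2 / 2 := (RCLike.re_le_norm _).trans (ha x)
  refine (sq_le_sq₀ (norm_nonneg _) hε.le).1 ?_
  calc ‖𝔼 p : ι × κ, f (x + (a p.1 + b p.2))‖ ^ 2
      ≤ (𝔼 i, ‖𝔼 j, f (x + a i + b j)‖) ^ 2 := by
        rw [expect_add_prod]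
        gcongr
        exact RCLike.norm_expect_le (K := 𝕜)
    _ ≤ 𝔼 i, ‖𝔼 j, f (x + a i + b j)‖ ^ 2 := by
        simpa using Finset.expect_mul_sq_le_sq_mul_sq Finset.univ
          (fun i => ‖𝔼 j, f (x + a i + b j)‖) 1
    _ ≤ 𝔼 i, (RCLike.re (g (x + a i)) + ε ^ 2 / 2) := by
        gcongr with i
        exact hfg (x + a i)
    _ = RCLike.re (𝔼 i, g (x + a i)) + ε ^ 2 / 2 := by
        rw [Finset.expect_add_distrib, Fintype.expect_const]
        simp only [Finset.expect, map_nnrat_smul, map_sum]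
    _ ≤ ε ^ 2 := by linarith

variable {H : Type*} [SeminormedAddCommGroup H] [InnerProductSpace 𝕜 H]

lemma norm_sum_inner_sq_le {ι : Type*} (s : Finset ι) (ψ : H) {u : ι → H}
    (hu : ∀ i ∈ s, ‖u i‖ ≤ 1) :
    ‖∑ i ∈ s, ⟪ψ, u i⟫_𝕜‖ ^ 2 ≤
      ‖ψ‖ ^ 2 * (RCLike.re (∑ p ∈ s.offDiag, ⟪u p.1, u p.2⟫_𝕜) + s.card) := by
  classical
  have hdiag : RCLike.re (∑ i ∈ s, ⟪u i, u i⟫_𝕜) ≤ s.card := by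
    have hle (i) (hi : i ∈ s) : RCLike.re ⟪u i, u i⟫_𝕜 ≤ 1 := by
      rw [inner_self_eq_norm_sq]
      exact pow_le_one₀ (norm_nonneg _) (hu i hi)
    simpa using Finset.sum_le_sum hle
  calc ‖∑ i ∈ s, ⟪ψ, u i⟫_𝕜‖ ^ 2 = ‖⟪ψ, ∑ i ∈ s, u i⟫_𝕜‖ ^ 2 := by rw [inner_sum]
    _ ≤ ‖ψ‖ ^ 2 * ‖∑ i ∈ s, u i‖ ^ 2 := by
      rw [← mul_pow]
      gcongr
      exact norm_inner_le_norm _ _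
    _ = ‖ψ‖ ^ 2 * (RCLike.re (∑ p ∈ s.offDiag, ⟪u p.1, u p.2⟫_𝕜) +
          RCLike.re (∑ i ∈ s, ⟪u i, u i⟫_𝕜)) := by
      rw [← inner_self_eq_norm_sq (𝕜 := 𝕜) (∑ i ∈ s, u i), sum_inner]
      simp only [inner_sum]
      rw [← Finset.sum_product', ← Finset.diag_union_offDiag,
        Finset.sum_union (Finset.disjoint_diag_offDiag s), Finset.sum_diag, map_add, add_comm]
    _ ≤ _ := by gcongr

lemma norm_expect_inner_sq_le {ι : Type*} [Fintype ι] [Nonempty ι] (ψ : H) {u : ι → H}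
    (hu : ∀ i, ‖u i‖ ≤ 1) :
    ‖𝔼 i, ⟪ψ, u i⟫_𝕜‖ ^ 2 ≤ ‖ψ‖ ^ 2 / Fintype.card ι ^ 2 *
      RCLike.re (∑ p ∈ Finset.univ.offDiag, ⟪u p.1, u p.2⟫_𝕜) + ‖ψ‖ ^ 2 / Fintype.card ι := by
  have hsum := norm_sum_inner_sq_le (𝕜 := 𝕜) Finset.univ ψ fun i _ => hu i
  rw [Fintype.expect_eq_sum_div_card, norm_div, RCLike.norm_natCast, div_pow,
    div_le_iff₀ (by positivity)]
  refine hsum.trans_eq ?_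
  rw [Finset.card_univ]
  field_simp

lemma sum_inner_mem_meanNull {ι : Type*} {s : Finset (ι × ι)} {u : A → H} {a : ι → A}
    (ha : ∀ p ∈ s, (fun x => ⟪u x, u (x + (a p.2 - a p.1))⟫_𝕜) ∈ meanNull A 𝕜) :
    (fun x => ∑ p ∈ s, ⟪u (x + a p.1), u (x + a p.2)⟫_𝕜) ∈ meanNull A 𝕜 := by
  rw [← Finset.sum_fn]
  refine sum_mem fun p hp => ?_
  simpa only [add_assoc, add_sub_cancel] using translate_mem_meanNull (ha p hp) (a p.1)

lemma inner_mem_meanNull_of_eventually [Infinite A] {u : A → H} (hu : ∀ x, ‖u x‖ ≤ 1)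
    (hcorr : ∀ᶠ h in cofinite, (fun x => ⟪u x, u (x + h)⟫_𝕜) ∈ meanNull A 𝕜) (ψ : H) :
    (fun x => ⟪ψ, u x⟫_𝕜) ∈ meanNull A 𝕜 := by
  obtain ⟨a, ha⟩ := exists_seq_pairwise_sub hcorr
  refine mem_meanNull_of_forall_norm_expect_sq_le fun ε hε => ?_
  obtain ⟨N, hN⟩ := exists_nat_gt (‖ψ‖ ^ 2 / ε)
  have hNpos : (0 : ℝ) < N := (by positivity : 0 ≤ ‖ψ‖ ^ 2 / ε).trans_lt hN
  have : NeZero N := ⟨by rintro rfl; simp at hNpos⟩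
  have hcorr_sum := sum_inner_mem_meanNull (𝕜 := 𝕜) (s := Finset.univ.offDiag) (u := u)
    (a := fun j : Fin N => a j) fun p hp => ha (Fin.val_injective.ne (Finset.mem_offDiag.1 hp).2.2)
  refine ⟨Fin N, inferInstance, inferInstance, fun j => a j, _,
    Submodule.smul_mem _ ((‖ψ‖ ^ 2 / N ^ 2 : ℝ) : 𝕜) hcorr_sum, fun x => ?_⟩
  refine (norm_expect_inner_sq_le ψ fun j : Fin N => hu (x + a j)).trans ?_
  rw [Fintype.card_fin, Pi.smul_apply, smul_eq_mul, RCLike.re_ofReal_mul]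
  gcongr
  rw [div_lt_iff₀ hε] at hN
  rw [div_le_iff₀ hNpos]
  linarith

end VanDerCorput
end MeanNull

section Fourier
open scoped BoundedContinuousFunction ComplexConjugate InnerProductSpace

section Uniqueness

variable {X G : Type*} [TopologicalSpace X] [MeasurableSpace X] [BorelSpace X] [AddCommGroup G]

lemma integral_eq_of_mem_span {S : Set (X →ᵇ ℂ)} {μ ν : Measure X} [IsFiniteMeasure μ]
    [IsFiniteMeasure ν] (hS : ∀ f ∈ S, ∫ x, f x ∂μ = ∫ x, f x ∂ν) {f : X →ᵇ ℂ}
    (hf : f ∈ Submodule.span ℂ S) : ∫ x, f x ∂μ = ∫ x, f x ∂ν := by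
  induction hf using Submodule.span_induction with
  | mem f hf => exact hS f hf
  | zero => simp only [BoundedContinuousFunction.coe_zero, Pi.zero_apply, integral_zero]
  | add f g _ _ hf hg =>
    simp only [BoundedContinuousFunction.coe_add, Pi.add_apply]
    rw [integral_add (f.integrable _) (g.integrable _),
      integral_add (f.integrable _) (g.integrable _), hf, hg]
  | smul c f _ hf => simp only [BoundedContinuousFunction.coe_smul, integral_smul, hf]

lemma ext_of_integral_addChar_eq [PolishSpace X] (χ : AddChar G (X →ᵇ ℂ))
    (hstar : ∀ g, star (χ g) = χ (-g)) (hsep : ∀ x y, x ≠ y → ∃ g, χ g x ≠ χ g y)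
    {μ ν : Measure X} [IsFiniteMeasure μ] [IsFiniteMeasure ν]
    (h : ∀ g, ∫ x, χ g x ∂μ = ∫ x, χ g x ∂ν) : μ = ν := by
  let S : Submonoid (X →ᵇ ℂ) := MonoidHom.mrange χ.toMonoidHom
  have hS_star : star (S : Set (X →ᵇ ℂ)) ⊆ S := by
    rintro f ⟨g, hg⟩
    refine ⟨Multiplicative.ofAdd (-g.toAdd), ?_⟩
    rw [← star_star f, ← hg]
    exact (hstar _).symm
  refine ext_of_forall_mem_subalgebra_integral_eq_of_polish
    (A := StarAlgebra.adjoin ℂ (S : Set (X →ᵇ ℂ))) (fun x y hxy => ?_) fun f hf => ?_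
  · obtain ⟨g, hg⟩ := hsep x y hxy
    exact ⟨χ g, ⟨_, ⟨χ g, StarAlgebra.subset_adjoin ℂ _ ⟨.ofAdd g, rfl⟩, rfl⟩, rfl⟩, hg⟩
  · have hspan : f ∈ Submodule.span ℂ (S : Set (X →ᵇ ℂ)) := by
      have := StarAlgebra.adjoin_eq_span (R := ℂ) (S : Set (X →ᵇ ℂ))
      rw [Set.union_eq_self_of_subset_right hS_star, Submonoid.closure_eq] at this
      rw [← this]
      exact hf
    refine integral_eq_of_mem_span ?_ hspan
    rintro _ ⟨g, rfl⟩
    exact h g.toAdd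

end Uniqueness

section Discrete
variable {A ι : Type*} [AddCommGroup A] [TopologicalSpace A]

lemma exists_injective_addCircle_rat_real :
    ∃ f : AddCircle (1 : ℚ) →+ AddCircle (1 : ℝ), Function.Injective f := by
  refine ⟨QuotientAddGroup.map _ _ (Rat.castHom ℝ : ℚ →+* ℝ).toAddMonoidHom ?_, ?_⟩
  · intro x hx
    obtain ⟨k, rfl⟩ := AddSubgroup.mem_zmultiples_iff.1 hx
    exact AddSubgroup.mem_zmultiples_iff.2 ⟨k, by simp⟩
  · refine (injective_iff_map_eq_zero _).2 fun y hy => ?_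
    induction y using QuotientAddGroup.induction_on with
    | H y =>
      have hy' : ((y : ℝ) : AddCircle (1 : ℝ)) = 0 := hy
      obtain ⟨k, hk⟩ := (AddCircle.coe_eq_zero_iff (1 : ℝ)).1 hy'
      refine (AddCircle.coe_eq_zero_iff (1 : ℚ)).2 ⟨k, ?_⟩
      simp only [zsmul_eq_mul, mul_one] at hk ⊢
      exact_mod_cast hk

lemma exists_addDual_apply_ne_one [DiscreteTopology A] {a : A} (ha : a ≠ 0) :
    ∃ ξ : AddDual A, ξ (Multiplicative.ofAdd a) ≠ 1 := by
  obtain ⟨c, hc⟩ := CharacterModule.exists_character_apply_ne_zero_of_ne_zero ha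
  obtain ⟨f, hf⟩ := exists_injective_addCircle_rat_real
  let ξ : Multiplicative A →ₜ* Circle :=
    { toFun x := AddCircle.toCircle (f (c x.toAdd))
      map_one' := by simp
      map_mul' x y := by simp [AddCircle.toCircle_add]
      continuous_toFun := continuous_of_discreteTopology }
  refine ⟨ξ, fun h => hc ((map_eq_zero_iff f hf).1 ?_)⟩
  exact AddCircle.injective_toCircle one_ne_zero (h.trans AddCircle.toCircle_zero.symm)

lemma polishSpace_addDual [DiscreteTopology A] [Countable A] : PolishSpace (AddDual A) := by
  have : Countable (Multiplicative A) := inferInstanceAs (Countable A)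
  have : SecondCountableTopology (AddDual A) :=
    (ContinuousMonoidHom.isInducing_toContinuousMap
      (Multiplicative A) Circle).secondCountableTopology
  let _ := TopologicalSpace.metrizableSpaceMetric (AddDual A)
  infer_instance

lemma continuous_addDual_apply (a : A) :
    Continuous fun ξ : AddDual A => (ξ (Multiplicative.ofAdd a) : ℂ) := by
  refine continuous_subtype_val.comp ?_
  exact continuous_eval_const (F := ContinuousMonoidHom (Multiplicative A) Circle)
    (Multiplicative.ofAdd a)

variable [Fintype ι]

variable (A ι) in
/-- The character `ξ ↦ ∏ i, ξ i (w i)` of `Âⁱ` attached to `w : ι → A`, as a bounded continuous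
function. -/
def dualChar : AddChar (ι → A) ((ι → AddDual A) →ᵇ ℂ) where
  toFun w := BoundedContinuousFunction.ofNormedAddCommGroup
    (fun ξ => ∏ i, (ξ i (Multiplicative.ofAdd (w i)) : ℂ))
    (continuous_finsetProd _ fun i _ => (continuous_addDual_apply (w i)).comp (continuous_apply i))
    1 fun ξ => by simp only [norm_prod, Circle.norm_coe, Finset.prod_const_one, le_refl]
  map_zero_eq_one' := by ext ξ; simp
  map_add_eq_mul' v w := by ext ξ; simp [Finset.prod_mul_distrib]

lemma dualChar_apply (w : ι → A) (ξ : ι → AddDual A) :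
    dualChar A ι w ξ = ∏ i, (ξ i (Multiplicative.ofAdd (w i)) : ℂ) :=
  rfl

lemma dualChar_single [DecidableEq ι] (i : ι) (a : A) (ξ : ι → AddDual A) :
    dualChar A ι (Pi.single i a) ξ = ξ i (Multiplicative.ofAdd a) := by
  rw [dualChar_apply, Finset.prod_eq_single i]
  · simp
  · intro j _ hj
    simp [Pi.single_eq_of_ne hj]
  · simp

lemma star_dualChar (w : ι → A) : star (dualChar A ι w) = dualChar A ι (-w) := by
  ext ξ
  simp [dualChar_apply, ← Circle.coe_inv_eq_conj]

lemma exists_dualChar_apply_ne {ξ η : ι → AddDual A} (h : ξ ≠ η) :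
    ∃ w, dualChar A ι w ξ ≠ dualChar A ι w η := by
  classical
  obtain ⟨i, hi⟩ := Function.ne_iff.1 h
  obtain ⟨a, ha⟩ := DFunLike.ne_iff.1 hi
  refine ⟨Pi.single i a.toAdd, ?_⟩
  rw [dualChar_single, dualChar_single]
  exact fun h => ha (Circle.ext h)

variable [MeasurableSpace (AddDual A)]

/-- The Fourier–Stieltjes transform of a measure on `Âⁱ`. -/
def dualFourier (θ : Measure (ι → AddDual A)) (w : ι → A) : ℂ :=
  ∫ ξ, dualChar A ι w ξ ∂θ

lemma dualFourier_zero (θ : Measure (ι → AddDual A)) [IsProbabilityMeasure θ] :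
    dualFourier θ 0 = 1 := by
  simp [dualFourier]

variable [BorelSpace (AddDual A)] [DiscreteTopology A]

lemma integral_addDual_apply_eq_zero (μ : Measure (AddDual A)) [μ.IsMulLeftInvariant] {a : A}
    (ha : a ≠ 0) : ∫ ξ, (ξ (Multiplicative.ofAdd a) : ℂ) ∂μ = 0 := by
  obtain ⟨η, hη⟩ := exists_addDual_apply_ne_one ha
  have hmul : (η (Multiplicative.ofAdd a) : ℂ) * ∫ ξ, (ξ (Multiplicative.ofAdd a) : ℂ) ∂μ =
      ∫ ξ, (ξ (Multiplicative.ofAdd a) : ℂ) ∂μ := by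
    rw [← integral_const_mul]
    exact integral_mul_left_eq_self (fun ξ : AddDual A => (ξ (Multiplicative.ofAdd a) : ℂ)) η
  by_contra hne
  exact hη (Circle.ext ((mul_eq_right₀ hne).1 hmul))

lemma dualFourier_pi_eq_zero (μ : Measure (AddDual A)) [μ.IsMulLeftInvariant] [SigmaFinite μ]
    {w : ι → A} (hw : w ≠ 0) : dualFourier (Measure.pi fun _ => μ) w = 0 := by
  obtain ⟨i, hi⟩ := Function.ne_iff.1 hw
  simp only [dualFourier, dualChar_apply]
  rw [integral_fintype_prod_eq_prod (𝕜 := ℂ)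
    (fun i (ξ : AddDual A) => (ξ (Multiplicative.ofAdd (w i)) : ℂ))]
  exact Finset.prod_eq_zero (Finset.mem_univ i) (integral_addDual_apply_eq_zero μ hi)

lemma dualFourier_single_eq_zero [DecidableEq ι] (θ : Measure (ι → AddDual A)) (i : ι)
    [(θ.map fun ξ => ξ i).IsMulLeftInvariant] {a : A} (ha : a ≠ 0) :
    dualFourier θ (Pi.single i a) = 0 := by
  simp only [dualFourier, dualChar_single]
  rw [← integral_addDual_apply_eq_zero (θ.map fun ξ => ξ i) ha,
    integral_map (measurable_pi_apply i).aemeasurable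
      (continuous_addDual_apply a).measurable.aestronglyMeasurable]

variable [Countable A]

lemma ext_of_dualFourier_eq {θ θ' : Measure (ι → AddDual A)} [IsFiniteMeasure θ]
    [IsFiniteMeasure θ'] (h : ∀ w, dualFourier θ w = dualFourier θ' w) : θ = θ' :=
  have := polishSpace_addDual (A := A)
  ext_of_integral_addChar_eq (dualChar A ι) star_dualChar
    (fun _ _ => exists_dualChar_apply_ne) h

lemma exists_forall_inner_eq_dualFourier (θ : Measure (ι → AddDual A)) [IsFiniteMeasure θ] :
    ∃ e : (ι → A) → Lp ℂ 2 θ, ∀ v w, ⟪e v, e w⟫_ℂ = dualFourier θ (w - v) := by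
  have := polishSpace_addDual (A := A)
  refine ⟨fun w => BoundedContinuousFunction.toLp 2 θ ℂ (dualChar A ι w), fun v w => ?_⟩
  rw [BoundedContinuousFunction.inner_toLp, dualFourier]
  congr 1
  funext ξ
  rw [sub_eq_add_neg, AddChar.map_add_eq_mul, ← star_dualChar]
  rfl

end Discrete

section Field

variable {K ι : Type*} [Field K] [TopologicalSpace K] [DiscreteTopology K]

lemma continuous_dualSmul (a : K) : Continuous (dualSmul a : AddDual K → AddDual K) :=
  ContinuousMonoidHom.continuous_comp_left (C := Circle) _

variable [Fintype ι] [MeasurableSpace (AddDual K)] [BorelSpace (AddDual K)]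

lemma dualFourier_mul_of_map_dualSmul_eq [Countable K] {θ : Measure (ι → AddDual K)} {c : ι → K}
    (hθ : θ.map (fun ξ i => dualSmul (c i) (ξ i)) = θ) (w : ι → K) :
    dualFourier θ (c * w) = dualFourier θ w := by
  have := polishSpace_addDual (A := K)
  have hmeas : Measurable fun (ξ : ι → AddDual K) i => dualSmul (c i) (ξ i) :=
    measurable_pi_lambda _ fun i => (continuous_dualSmul _).measurable.comp (measurable_pi_apply i)
  conv_rhs => rw [← hθ, dualFourier, integral_map hmeas.aemeasurable
    (dualChar K ι w).continuous.measurable.aestronglyMeasurable]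
  rfl

end Field
end Fourier

section MomentCurve

lemma dualFourier_comp_mem_meanNull {A B ι : Type*} [AddCommGroup A] [Countable A]
    [TopologicalSpace A] [DiscreteTopology A] [MeasurableSpace (AddDual A)] [BorelSpace (AddDual A)]
    [Fintype ι] [AddCommGroup B] [Infinite B] {θ : Measure (ι → AddDual A)}
    [IsProbabilityMeasure θ] {v : B → ι → A}
    (hv : ∀ᶠ h in cofinite, (fun x => dualFourier θ (Δ_[h] v x)) ∈ meanNull B ℂ) :
    (fun x => dualFourier θ (v x)) ∈ meanNull B ℂ := by
  obtain ⟨e, he⟩ := exists_forall_inner_eq_dualFourier θ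
  have norm_le_one (w : ι → A) : ‖e w‖ ≤ 1 := by
    refine (sq_le_one_iff₀ (norm_nonneg _)).1 ?_
    rw [← inner_self_eq_norm_sq (𝕜 := ℂ), he, sub_self, dualFourier_zero, RCLike.one_re]
  have hcorr : ∀ᶠ h in cofinite,
      (fun x => inner ℂ (e (v x)) (e (v (x + h)))) ∈ meanNull B ℂ := by
    simpa only [he, fwdDiff] using hv
  simpa only [he, sub_zero] using
    inner_mem_meanNull_of_eventually (fun x => norm_le_one (v x)) hcorr (e 0)

section Monomial
open Polynomial

variable {K : Type*} [Field K]

lemma isQuotient_zpow_natCast_mul (e : ℕ) (c : K) :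
    IsQuotient (fun x => x ^ (e : ℤ) * c) (C c * X ^ e) 1 :=
  ⟨one_ne_zero, .of_forall fun x => by simp [mul_comm c]⟩

lemma isQuotient_zpow_neg_mul (e : ℕ) (c : K) :
    IsQuotient (fun x => x ^ (-e : ℤ) * c) (C c) (X ^ e) := by
  refine ⟨pow_ne_zero e X_ne_zero, ?_⟩
  filter_upwards [eventually_cofinite_ne 0] with x hx
  have hxe : x ^ e ≠ 0 := pow_ne_zero e hx
  rw [eval_pow, eval_X, eval_C, zpow_neg, zpow_natCast,
    mul_right_comm, inv_mul_cancel₀ hxe, one_mul]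

lemma zpow_mul_mem_functionalDegreeLT_iff [Infinite K] (q : ℕ) [ExpChar K q] {c : K} (hc : c ≠ 0)
    (e d : ℕ) :
    (fun x => x ^ (e : ℤ) * c) ∈ functionalDegreeLT K K K d ↔ (q.digits e).sum < d := by
  have hsmul : (fun x : K => x ^ (e : ℤ) * c) = c • fun x => x ^ e := by
    funext x
    simp [mul_comm]
  rw [hsmul, Submodule.smul_mem_iff _ hc, pow_mem_functionalDegreeLT_iff q]

lemma zpow_neg_mul_notMem_functionalDegreeLT [Infinite K] {e : ℕ} (he : e ≠ 0) {c : K} (hc : c ≠ 0)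
    (d : ℕ) : (fun x => x ^ (-e : ℤ) * c) ∉ functionalDegreeLT K K K d := by
  intro hmem
  have hdeg : (C c).degree < (X ^ e : K[X]).degree := by
    rw [degree_C hc, degree_X_pow]
    exact_mod_cast Nat.pos_of_ne_zero he
  obtain ⟨x, hx, hx0⟩ := (((isQuotient_zpow_neg_mul e c).eventuallyEq_zero_of_mem hdeg hmem).and
    (eventually_cofinite_ne 0)).exists
  exact mul_ne_zero (zpow_ne_zero _ hx0) hc hx

lemma exists_forall_zpow_mul_mem_functionalDegreeLT [Infinite K] {ι : Type*} [Finite ι]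
    (n : ι → ℤ) (w : ι → K) :
    ∃ d, ∀ i, 0 < n i → (fun x => x ^ n i * w i) ∈ functionalDegreeLT K K K d := by
  let s (i : ι) : ℕ := ((ringExpChar K).digits (n i).toNat).sum
  obtain ⟨b, hb⟩ := (Set.finite_range s).bddAbove
  refine ⟨b + 1, fun i hi => ?_⟩
  by_cases hwi : w i = 0
  · simp only [hwi, mul_zero]
    exact Submodule.zero_mem _
  rw [← Int.toNat_of_nonneg hi.le, zpow_mul_mem_functionalDegreeLT_iff (ringExpChar K) hwi]
  exact Nat.lt_succ_of_le (hb ⟨i, rfl⟩)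

end Monomial

variable {K ι : Type*} [Field K] [Countable K] [Infinite K] [TopologicalSpace K]
  [DiscreteTopology K] [MeasurableSpace (AddDual K)] [BorelSpace (AddDual K)] [Fintype ι]
  {θ : Measure (ι → AddDual K)} {n : ι → ℤ} {w : ι → K}

lemma dualFourier_eq_zero_of_zpow_mul_mem_meanNull
    (hinv : ∀ a : Kˣ, θ.map (fun ξ i => dualSmul ((a ^ n i : Kˣ) : K) (ξ i)) = θ) (k : ℤ)
    (hmem : (fun x : K => dualFourier θ fun i => x ^ (k * n i) * w i) ∈ meanNull K ℂ) :
    dualFourier θ w = 0 := by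
  refine eq_zero_of_mem_meanNull_of_eventuallyEq_const hmem ?_
  filter_upwards [eventually_cofinite_ne 0] with x hx
  have hx_inv := dualFourier_mul_of_map_dualSmul_eq (hinv (Units.mk0 x hx ^ k)) w
  simp only [← zpow_mul, Units.val_zpow_eq_zpow_val, Units.val_mk0] at hx_inv
  exact hx_inv

variable [IsProbabilityMeasure θ]

lemma dualFourier_comp_mem_meanNull_of_isQuotient {i₀ : ι} {T : Set ι} {d : ℕ}
    {v : K → ι → K} {P Q : Polynomial K}
    (hθ : ∀ w, w i₀ ≠ 0 → (∀ i ∈ T, w i = 0) → dualFourier θ w = 0)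
    (hvT : ∀ i ∈ T, (fun x => v x i) ∈ functionalDegreeLT K K K d)
    (hquot : IsQuotient (fun x => v x i₀) P Q)
    (hvi₀ : (fun x => v x i₀) ∉ functionalDegreeLT K K K d) :
    (fun x => dualFourier θ (v x)) ∈ meanNull K ℂ := by
  induction d generalizing v P Q with
  | zero =>
    refine mem_meanNull_of_eventuallyEq_zero ?_
    filter_upwards [hquot.eventually_ne_zero hvi₀, (eventually_all_finite T.toFinite).2 hvT]
      with x hx hxT
    exact hθ (v x) hx hxT
  | succ d ih =>
    refine dualFourier_comp_mem_meanNull ?_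
    filter_upwards [hquot.eventually_fwdDiff_notMem hvi₀] with h hh
    exact ih (fun i hi => mem_functionalDegreeLT_succ.1 (hvT i hi) h) (hquot.fwdDiff h) hh

variable [∀ i, (θ.map fun ξ => ξ i).IsMulLeftInvariant]

lemma dualFourier_eq_zero_of_forall_pos (hninj : Function.Injective n)
    (hn : ∀ i, (n i : K) ≠ 0)
    (hinv : ∀ a : Kˣ, θ.map (fun ξ i => dualSmul ((a ^ n i : Kˣ) : K) (ξ i)) = θ)
    (hw : w ≠ 0) (hpos : ∀ i, w i ≠ 0 → 0 < n i) : dualFourier θ w = 0 := by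
  classical
  obtain ⟨i₀, hwi₀, hmax⟩ := Set.exists_max_image {i | w i ≠ 0} n (Set.toFinite _)
    (Function.ne_iff.1 hw)
  obtain ⟨N, hN⟩ := Int.eq_ofNat_of_zero_le (hpos i₀ hwi₀).le
  let q := ringExpChar K
  have hcop : q.Coprime N := coprime_of_natCast_ne_zero (K := K) q (by exact_mod_cast hN ▸ hn i₀)
  obtain ⟨k, hdigits⟩ := exists_forall_lt_sum_digits_mul_lt (expChar_pos K q) hcop
  have hi₀ : (fun x : K => x ^ (k * n i₀) * w i₀) = fun x => x ^ ((k * N : ℕ) : ℤ) * w i₀ := by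
    rw [hN, Nat.cast_mul]
  refine dualFourier_eq_zero_of_zpow_mul_mem_meanNull hinv k
    (dualFourier_comp_mem_meanNull_of_isQuotient (i₀ := i₀) (T := {i₀}ᶜ)
      (d := (q.digits (k * N)).sum) ?_ ?_ (hi₀ ▸ isQuotient_zpow_natCast_mul _ _) ?_)
  · intro u hu hu'
    have hu_single : u = Pi.single i₀ (u i₀) := by
      funext i
      rcases eq_or_ne i i₀ with rfl | hi
      · simp
      · simpa [hi] using hu' i hi
    rw [hu_single]
    exact dualFourier_single_eq_zero θ i₀ hu
  · intro i hi
    by_cases hwi : w i = 0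
    · simp only [hwi, mul_zero]
      exact Submodule.zero_mem _
    obtain ⟨N', hN'⟩ := Int.eq_ofNat_of_zero_le (hpos i hwi).le
    have hlt : n i < n i₀ := lt_of_le_of_ne (hmax i hwi) (hninj.ne hi)
    rw [hN', ← Nat.cast_mul, zpow_mul_mem_functionalDegreeLT_iff q hwi]
    exact hdigits N' (by omega)
  · rw [hi₀, zpow_mul_mem_functionalDegreeLT_iff q hwi₀]
    exact lt_irrefl _

lemma dualFourier_eq_zero (hninj : Function.Injective n) (hn : ∀ i, (n i : K) ≠ 0)
    (hinv : ∀ a : Kˣ, θ.map (fun ξ i => dualSmul ((a ^ n i : Kˣ) : K) (ξ i)) = θ)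
    (hw : w ≠ 0) : dualFourier θ w = 0 := by
  by_cases hpos : ∀ i, w i ≠ 0 → 0 < n i
  · exact dualFourier_eq_zero_of_forall_pos hninj hn hinv hw hpos
  push Not at hpos
  obtain ⟨i₀, hwi₀, hi₀⟩ := hpos
  obtain ⟨e, he⟩ := Int.exists_eq_neg_ofNat hi₀
  have he0 : e ≠ 0 := by
    rintro rfl
    exact hn i₀ (by simp [he])
  have hvanish (u : ι → K) (hu : u i₀ ≠ 0) (hupos : ∀ i ∈ {i | 0 < n i}, u i = 0) :
      dualFourier θ u = 0 := by
    refine dualFourier_eq_zero_of_forall_pos (n := -n) (neg_injective.comp hninj)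
      (fun i => by simpa using hn i) (fun a => ?_) (Function.ne_iff.2 ⟨i₀, hu⟩) fun i hi => ?_
    · simpa using hinv a⁻¹
    · have hni : n i ≠ 0 := fun h => hn i (by simp [h])
      have hle : ¬ 0 < n i := fun h => hi (hupos i h)
      simp only [Pi.neg_apply]
      omega
  obtain ⟨d, hd⟩ := exists_forall_zpow_mul_mem_functionalDegreeLT n w
  refine dualFourier_eq_zero_of_zpow_mul_mem_meanNull hinv 1 ?_
  simp only [one_mul]
  have hi₀_eq : (fun x : K => x ^ n i₀ * w i₀) = fun x => x ^ (-e : ℤ) * w i₀ := by rw [he]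
  exact dualFourier_comp_mem_meanNull_of_isQuotient hvanish hd
    (hi₀_eq ▸ isQuotient_zpow_neg_mul e _)
    (hi₀_eq ▸ zpow_neg_mul_notMem_functionalDegreeLT he0 hwi₀ d)

end MomentCurve

/-- The moment-curve subgroup `Γ = {(a^{n₁},…,a^{n_r}) : a ∈ K^*}` of `(K^*)^r` is
coupling-resistant: the only `Γ`-invariant probability measure on `K̂^r` with Haar
marginals is the product of Haar measures. -/
theorem statement15
    {K : Type*} [Field K] [Countable K] [Infinite K]
    [TopologicalSpace K] [DiscreteTopology K]
    [MeasurableSpace (AddDual K)] [BorelSpace (AddDual K)]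
    (mK : Measure (AddDual K)) [mK.IsHaarMeasure] [IsProbabilityMeasure mK]
    (r : ℕ) (n : Fin r → ℤ) (hninj : Function.Injective n) (hn0 : ∀ i, n i ≠ 0)
    (hchar : ∀ i, ¬ ((ringChar K : ℤ) ∣ n i))
    (θ : Measure (Fin r → AddDual K)) [IsProbabilityMeasure θ]
    (hmarg : ∀ i, θ.map (fun ξ => ξ i) = mK)
    (hinv : ∀ a : Kˣ,
      θ.map (fun (ξ : Fin r → AddDual K) i => dualSmul ((a ^ n i : Kˣ) : K) (ξ i)) = θ) :
    θ = Measure.pi (fun _ => mK) := by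
  have (i : Fin r) : (θ.map fun ξ => ξ i).IsMulLeftInvariant := by
    rw [hmarg i]
    infer_instance
  have hn (i : Fin r) : (n i : K) ≠ 0 :=
    mt (CharP.intCast_eq_zero_iff K (ringChar K) (n i)).1 (hchar i)
  refine ext_of_dualFourier_eq fun w => ?_
  rcases eq_or_ne w 0 with rfl | hw
  · rw [dualFourier_zero, dualFourier_zero]
  · rw [dualFourier_eq_zero hninj hn hinv hw, dualFourier_pi_eq_zero mK hw]

end
end

section
/- Let K be a field with characteristic different from 2, and let F ⊆ K² be a set with at least 4 elements. Then for every t ∈ K*, the difference set (F − F) \ {(0,0)} is not contained in the hyperbola H_t = {(a, t/a) : a ∈ K*} ⊆ K². -/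
open Pointwise

/-!
Let `Q` be a quadratic map taking one nonzero value `t` on all differences of distinct points
`p i`. If weights satisfy `∑ w i = 0` and `∑ w i • p i = 0`, then `∑ w i • Q (p i - a)` does not
depend on `a`. At `a = p j` it equals `-w j • t`, so the weights are all equal; as they sum to `0`,
they vanish as soon as the number of points is nonzero in the ring. Hence the points are affinely
independent, and there are at most `dim + 1` of them. The hyperbola `H_t` lies in a level set
of `Q (x, y) = x * y` on `K²`, and `4 ≠ 0` outside characteristic `2`.
-/

section EquilateralFamilies

open QuadraticMap

variable {R M N ι : Type*} [CommRing R] [AddCommGroup M] [Module R M] [AddCommGroup N] [Module R N]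

theorem quadraticMap_sub_eq_add_sub_polar (Q : QuadraticMap R M N) (x y : M) :
    Q (x - y) = Q x + Q y - polar Q x y := by
  rw [sub_eq_add_neg, QuadraticMap.map_add Q, QuadraticMap.map_neg, polar_neg_right,
    ← sub_eq_add_neg]

theorem sum_smul_quadraticMap_sub_eq (Q : QuadraticMap R M N) {s : Finset ι} {w : ι → R}
    {p : ι → M} (hw : ∑ i ∈ s, w i = 0) (hwp : ∑ i ∈ s, w i • p i = 0) (a : M) :
    ∑ i ∈ s, w i • Q (p i - a) = ∑ i ∈ s, w i • Q (p i) := by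
  have hpolar : ∑ i ∈ s, w i • polar Q (p i) a = 0 := by
    simpa only [map_sum, map_smul, LinearMap.sum_apply, LinearMap.smul_apply,
      polarBilin_apply_apply, map_zero, LinearMap.zero_apply]
      using congrArg (fun x => Q.polarBilin x a) hwp
  simp only [quadraticMap_sub_eq_add_sub_polar, smul_sub, smul_add, Finset.sum_sub_distrib,
    Finset.sum_add_distrib, ← Finset.sum_smul, hw, hpolar, zero_smul, add_zero, sub_zero]

theorem sum_smul_quadraticMap_sub_of_pairwise_eq [Fintype ι] {Q : QuadraticMap R M N} {t : N}
    {p : ι → M} (hp : Pairwise fun i j => Q (p i - p j) = t) (w : ι → R) (j : ι) :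
    ∑ i, w i • Q (p i - p j) = (∑ i, w i - w j) • t := by
  classical
  rw [← Finset.sum_erase_eq_sub (Finset.mem_univ j), Finset.sum_smul,
    ← Finset.sum_erase _ (by rw [sub_self, QuadraticMap.map_zero, smul_zero])]
  exact Finset.sum_congr rfl fun i hi => by rw [hp (Finset.ne_of_mem_erase hi)]

theorem affineIndependent_of_pairwise_quadraticMap_sub_eq [IsDomain R] [Module.IsTorsionFree R N]
    [Fintype ι] {Q : QuadraticMap R M N} {t : N} (ht : t ≠ 0) (hι : (Fintype.card ι : R) ≠ 0)
    {p : ι → M} (hp : Pairwise fun i j => Q (p i - p j) = t) :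
    AffineIndependent R p := by
  refine (affineIndependent_iff_of_fintype R p).mpr fun w hw hwp j => ?_
  rw [Finset.weightedVSub_eq_linear_combination _ hw] at hwp
  have hconst (i : ι) : w i = w j := by
    have hsmul : (∑ k, w k - w i) • t = (∑ k, w k - w j) • t := by
      rw [← sum_smul_quadraticMap_sub_of_pairwise_eq hp,
        ← sum_smul_quadraticMap_sub_of_pairwise_eq hp,
        sum_smul_quadraticMap_sub_eq Q hw hwp, sum_smul_quadraticMap_sub_eq Q hw hwp]
    exact sub_right_injective (smul_left_injective R ht hsmul)
  have hcard : (Fintype.card ι : R) * w j = 0 := by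
    rw [← hw, Finset.sum_congr rfl fun i _ => hconst i, Finset.sum_const, Finset.card_univ,
      nsmul_eq_mul]
  exact (mul_eq_zero.mp hcard).resolve_left hι

theorem card_le_finrank_succ_of_affineIndependent {S V : Type*} [Ring S] [StrongRankCondition S]
    [AddCommGroup V] [Module S V] [Module.Finite S V] [Fintype ι] {p : ι → V}
    (hp : AffineIndependent S p) : Fintype.card ι ≤ Module.finrank S V + 1 := by
  classical
  rcases isEmpty_or_nonempty ι with _ | ⟨⟨i₀⟩⟩
  · simp only [Fintype.card_eq_zero, zero_le]
  · have hcard :=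
      ((affineIndependent_iff_linearIndependent_vsub S p i₀).mp hp).fintype_card_le_finrank
    rw [Fintype.card_subtype_compl, Fintype.card_subtype_eq] at hcard
    exact tsub_le_iff_right.mp hcard

theorem statement18_general [IsDomain R] [Module.IsTorsionFree R N] [Module.Finite R M]
    (Q : QuadraticMap R M N) {n : ℕ} (hn : Module.finrank R M + 1 < n) (hnR : (n : R) ≠ 0)
    (F : Set M) (hF : ∃ f : Fin n → M, Function.Injective f ∧ ∀ i, f i ∈ F) {t : N} (ht : t ≠ 0) :
    ¬ ((F - F) \ {0} ⊆ {x : M | Q x = t}) := by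
  intro hsub
  obtain ⟨f, hinj, hf⟩ := hF
  have hequilateral : Pairwise fun i j => Q (f i - f j) = t := fun i j hij =>
    hsub ⟨Set.sub_mem_sub (hf i) (hf j), sub_ne_zero.mpr (hinj.ne hij)⟩
  have hindep : AffineIndependent R f :=
    affineIndependent_of_pairwise_quadraticMap_sub_eq ht (by rwa [Fintype.card_fin]) hequilateral
  have hcard := card_le_finrank_succ_of_affineIndependent hindep
  rw [Fintype.card_fin] at hcard
  exact hn.not_ge hcard

end EquilateralFamilies

theorem hyperbola_subset_linMulLin_fiber {K : Type*} [Field K] (t : K) :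
    {p : K × K | ∃ a : K, a ≠ 0 ∧ p = (a, t / a)} ⊆
      {p | QuadraticMap.linMulLin (LinearMap.fst K K K) (LinearMap.snd K K K) p = t} := by
  rintro _ ⟨a, ha, rfl⟩
  exact mul_div_cancel₀ t ha

theorem four_ne_zero_of_ringChar_ne_two {R : Type*} [NonAssocSemiring R] [Nontrivial R]
    [NoZeroDivisors R] (hR : ringChar R ≠ 2) : (4 : R) ≠ 0 := by
  rw [← two_add_two_eq_four, ← mul_two]
  exact mul_self_ne_zero.mpr (Ring.two_ne_zero hR)

/-- Hyperbolas do not contain difference sets of sets with at least four elements: if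
`char K ≠ 2`, `F ⊆ K²` has at least `4` elements and `t ∈ K^*`, then
`(F − F) \ {0}` is not contained in the hyperbola `H_t = {(a, t/a) : a ∈ K^*}`. -/
theorem statement18
    {K : Type*} [Field K] (hchar : ringChar K ≠ 2)
    (F : Set (K × K)) (hF : ∃ f : Fin 4 → K × K, Function.Injective f ∧ ∀ i, f i ∈ F) :
    ∀ t : K, t ≠ 0 →
      ¬ ((F - F) \ {((0 : K), (0 : K))} ⊆
          {p : K × K | ∃ a : K, a ≠ 0 ∧ p = (a, t / a)}) := by
  intro t ht hsub
  exact statement18_general _ (by simp) (mod_cast four_ne_zero_of_ringChar_ne_two hchar) F hF ht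
    (hsub.trans (hyperbola_subset_linMulLin_fiber t))
end

section
/- For every pair of continuous characters ξ₁, ξ₂ of the additive group (ℝ,+), the closure in the torus 𝕋² of the set {(ξ₁(t), ξ₂(1/t)) : t ∈ ℝ, t ≠ 0} is a proper subset of 𝕋², i.e., it is not all of 𝕋². -/
/-!
As `t → 0` the point `(f t, g t⁻¹)` can only accumulate on `{f 0} × Y`, and as `t → ∞` only on
`X × {g 0}`, so closing up the curve adds nothing outside these two slices. If `f` is a character
and `z ≠ f 0`, only countably many `t` satisfy `f t = z`: as soon as there is one, the kernel of `f`
is a proper closed subgroup of `ℝ`, hence cyclic, and the solutions form a coset of it. The closure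
therefore meets `{z} × Y` in a countable set.
-/

open Filter Set Topology

section Fibers

variable {A B : Type*} [AddCommGroup A] [LinearOrder A] [IsOrderedAddMonoid A] [Archimedean A]
  [TopologicalSpace A] [OrderTopology A] [AddGroup B]

lemma countable_addSubgroup_of_isClosed_of_ne_top {H : AddSubgroup A}
    (hclosed : IsClosed (H : Set A)) (hne : H ≠ ⊤) : Countable H := by
  rcases H.dense_or_cyclic with hdense | ⟨a, rfl⟩
  · exact absurd (SetLike.coe_injective (hclosed.closure_eq ▸ hdense.closure_eq)) hne
  · rw [← AddSubgroup.zmultiples_eq_closure]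
    exact (countable_range fun n : ℤ ↦ n • a).to_subtype

lemma countable_preimage_singleton_of_ne_zero [TopologicalSpace B] [T1Space B] {f : A →+ B}
    (hf : Continuous f) {z : B} (hz : z ≠ 0) : (f ⁻¹' {z}).Countable := by
  rcases (f ⁻¹' {z}).eq_empty_or_nonempty with hempty | ⟨a, rfl⟩
  · exact hempty ▸ countable_empty
  · have hker : Countable f.ker :=
      countable_addSubgroup_of_isClosed_of_ne_top (isClosed_singleton.preimage hf)
        fun htop ↦ hz (f.mem_ker.mp (htop ▸ AddSubgroup.mem_top a))
    exact (f.fiberEquivKer a).injective.countable.to_set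

end Fibers

lemma ultrafilter_le_cocompact_or_exists_le_nhds {T : Type*} [TopologicalSpace T]
    (u : Ultrafilter T) : (u : Filter T) ≤ cocompact T ∨ ∃ t, (u : Filter T) ≤ 𝓝 t := by
  refine or_iff_not_imp_left.mpr fun hu ↦ ?_
  obtain ⟨K, hK, hKu⟩ : ∃ K, IsCompact K ∧ Kᶜ ∉ u := by
    simpa [hasBasis_cocompact.ge_iff] using hu
  obtain ⟨t, -, hut⟩ := hK.ultrafilter_le_nhds' u (Ultrafilter.compl_notMem_iff.mp hKu)
  exact ⟨t, hut⟩

section Closure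

variable {𝕜 X Y : Type*} [NormedDivisionRing 𝕜] [ProperSpace 𝕜] [TopologicalSpace X] [T2Space X]
  [TopologicalSpace Y] [T2Space Y] {f : 𝕜 → X} {g : 𝕜 → Y}

lemma fst_eq_or_snd_eq_or_exists_of_mem_closure_prodMk_inv (hf : Continuous f)
    (hg : Continuous g) {p : X × Y}
    (hp : p ∈ closure {p : X × Y | ∃ t : 𝕜, t ≠ 0 ∧ p = (f t, g t⁻¹)}) :
    p.1 = f 0 ∨ p.2 = g 0 ∨ ∃ t : 𝕜, t ≠ 0 ∧ p = (f t, g t⁻¹) := by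
  have himage : {p : X × Y | ∃ t : 𝕜, t ≠ 0 ∧ p = (f t, g t⁻¹)} =
      (fun t ↦ (f t, g t⁻¹)) '' {0}ᶜ := by
    ext; simp [eq_comm]
  rw [himage, mem_closure_iff_ultrafilter] at hp
  obtain ⟨v, hv, hvp⟩ := hp
  obtain ⟨u, rfl⟩ : ∃ u : Ultrafilter 𝕜, u.map (fun t ↦ (f t, g t⁻¹)) = v :=
    ⟨_, Ultrafilter.ofComapInfPrincipal_eq_of_map hv⟩
  have hfst : Tendsto f u (𝓝 p.1) := (continuous_fst.tendsto p).comp hvp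
  have hsnd : Tendsto (fun t ↦ g t⁻¹) u (𝓝 p.2) := (continuous_snd.tendsto p).comp hvp
  rcases ultrafilter_le_cocompact_or_exists_le_nhds u with hu | ⟨t, hut⟩
  · rw [← Metric.cobounded_eq_cocompact] at hu
    have hg0 : Tendsto (fun t ↦ g t⁻¹) u (𝓝 (g 0)) :=
      (hg.tendsto 0).comp (tendsto_inv₀_cobounded.mono_left hu)
    exact .inr (.inl (tendsto_nhds_unique hsnd hg0))
  · have hfst_eq : p.1 = f t := tendsto_nhds_unique hfst ((hf.tendsto t).mono_left hut)
    rcases eq_or_ne t 0 with rfl | ht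
    · exact .inl hfst_eq
    · have hgt : Tendsto (fun t ↦ g t⁻¹) u (𝓝 (g t⁻¹)) :=
        (hg.tendsto _).comp ((tendsto_inv₀ ht).mono_left hut)
      exact .inr (.inr ⟨t, ht, Prod.ext hfst_eq (tendsto_nhds_unique hsnd hgt)⟩)

lemma countable_setOf_mk_mem_closure_prodMk_inv (hf : Continuous f) (hg : Continuous g) {x : X}
    (hx : x ≠ f 0) (hfiber : (f ⁻¹' {x}).Countable) :
    {y | (x, y) ∈ closure {p : X × Y | ∃ t : 𝕜, t ≠ 0 ∧ p = (f t, g t⁻¹)}}.Countable := by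
  refine ((hfiber.image fun t ↦ g t⁻¹).insert (g 0)).mono fun y hy ↦ ?_
  rcases fst_eq_or_snd_eq_or_exists_of_mem_closure_prodMk_inv hf hg hy with
    hfst | hsnd | ⟨t, -, hp⟩
  · exact absurd hfst hx
  · exact .inl hsnd
  · obtain ⟨rfl, rfl⟩ := Prod.mk.inj hp
    exact .inr (mem_image_of_mem _ rfl)

end Closure

instance instUncountableCircle : Uncountable Circle := by
  rw [Circle.argEquiv.uncountable_iff, ← not_countable_iff, countable_coe_iff,
    Cardinal.Real.Ioc_countable_iff, not_le]
  exact neg_lt_self Real.pi_pos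

theorem statement19_general {G Y : Type*} [Group G] [TopologicalSpace G] [T2Space G] [Nontrivial G]
    [TopologicalSpace Y] [T2Space Y] [Uncountable Y] {ξ : ℝ → G} {g : ℝ → Y}
    (hξc : Continuous ξ) (hξ : ∀ s t : ℝ, ξ (s + t) = ξ s * ξ t) (hg : Continuous g) :
    closure {p : G × Y | ∃ t : ℝ, t ≠ 0 ∧ p = (ξ t, g t⁻¹)} ≠ univ := by
  intro hdense
  obtain ⟨z, hz⟩ := exists_ne (1 : G)
  let φ : ℝ →+ Additive G := AddMonoidHom.mk' (Additive.ofMul ∘ ξ) hξ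
  have hξ0 : ξ 0 = 1 := map_zero φ
  have : T1Space (Additive G) := inferInstanceAs (T1Space G)
  have hfiber : (ξ ⁻¹' {z}).Countable :=
    countable_preimage_singleton_of_ne_zero (f := φ) (continuous_ofMul.comp hξc) hz
  have hslice := countable_setOf_mk_mem_closure_prodMk_inv hξc hg (hξ0 ▸ hz) hfiber
  simp only [hdense, mem_univ, ofPred_true] at hslice
  exact not_countable_univ hslice

/-- For continuous characters `ξ₁, ξ₂` of `(ℝ,+)`, the closure in the torus `𝕋²` of
`{(ξ₁(t), ξ₂(1/t)) : t ∈ ℝ^*}` is a proper subset of `𝕋²`. -/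
theorem statement19
    (ξ₁ ξ₂ : ℝ → Circle)
    (hξ₁c : Continuous ξ₁) (hξ₁ : ∀ s t : ℝ, ξ₁ (s + t) = ξ₁ s * ξ₁ t)
    (hξ₂c : Continuous ξ₂) (hξ₂ : ∀ s t : ℝ, ξ₂ (s + t) = ξ₂ s * ξ₂ t) :
    closure {p : Circle × Circle | ∃ t : ℝ, t ≠ 0 ∧ p = (ξ₁ t, ξ₂ t⁻¹)} ≠ Set.univ :=
  statement19_general hξ₁c hξ₁ hξ₂c
end
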